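/- arXiv:2106.00315 — 9 statements merged into one kernel-verified Lean document; each statement's English description precedes it below -/
import Mathlib

section
/- Let a, b be two distinct symbols and let L₀ = {a(aba)^n a : n ≥ 0} ∪ {ba(aba)^n b : n ≥ 0} over {a,b}. Then for every n ≥ 0: (1) a(aba)^n is a proper suffix of ba(aba)^n, and ba(aba)^n is a proper suffix of a(aba)^{n+1}; (2) (a(aba)^n)⁻¹L₀ ≠ (ba(aba)^n)⁻¹L₀; indeed a(aba)^n·a ∈ L₀ while ba(aba)^n·a ∉ L₀. -/
/-!
Common framework: words over an ordered alphabet, co-lexicographic order,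
(partial) DFAs and NFAs, Wheeler automata and Wheeler languages,
following "Ordering regular languages: a danger zone".
-/

namespace WheelerPaper

/-- Strict co-lexicographic order on words: compare the reverses lexicographically. -/
def Colex {A : Type} [LinearOrder A] (x y : List A) : Prop :=
  List.Lex (· < ·) x.reverse y.reverse

/-- Non-strict co-lexicographic order. -/
def ColexLE {A : Type} [LinearOrder A] (x y : List A) : Prop :=
  Colex x y ∨ x = y

/-- Right context `α⁻¹L` of a word `α` with respect to a language `L`. -/
def rc {A : Type} (L : Set (List A)) (α : List A) : Set (List A) :=
  {γ | α ++ γ ∈ L}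

/-- `Pref L`: the set of prefixes of words of `L`. -/
def Pref {A : Type} (L : Set (List A)) : Set (List A) :=
  {α | ∃ β, α ++ β ∈ L}

/-- `wpow γ i` is `γ^i`, the `i`-fold concatenation of the word `γ`. -/
def wpow {A : Type} (γ : List A) : ℕ → List A
  | 0 => []
  | n + 1 => γ ++ wpow γ n

/-- A DFA with a possibly partial transition function. -/
structure PDFA (A : Type) (Q : Type) where
  init : Q
  trans : Q → A → Option Q
  accept : Q → Prop

/-- Extended (partial) transition function of a `PDFA`. -/
def PDFA.evalFrom {A Q : Type} (M : PDFA A Q) : Q → List A → Option Q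
  | q, [] => some q
  | q, a :: w => (M.trans q a).bind fun q' => PDFA.evalFrom M q' w

/-- The language accepted by a `PDFA`. -/
def PDFA.accepts {A Q : Type} (M : PDFA A Q) : Set (List A) :=
  {w | ∃ q, M.evalFrom M.init w = some q ∧ M.accept q}

/-- A `PDFA` is trim if every state is reachable from the initial state and
every state can reach some accepting state. -/
def PDFA.Trim {A Q : Type} (M : PDFA A Q) : Prop :=
  (∀ q : Q, ∃ α, M.evalFrom M.init α = some q) ∧
  (∀ q : Q, ∃ α q', M.evalFrom q α = some q' ∧ M.accept q')

/-- `r` is a Wheeler order for the DFA `M`: a strict total order on states whose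
minimum is the initial state, the initial state has no incoming transitions, and
the two Wheeler conditions hold. -/
def IsWheelerOrder {A Q : Type} [LinearOrder A] (M : PDFA A Q) (r : Q → Q → Prop) : Prop :=
  IsStrictTotalOrder Q r ∧
  (∀ q : Q, q ≠ M.init → r M.init q) ∧
  (∀ (q : Q) (a : A), M.trans q a ≠ some M.init) ∧
  (∀ (u₁ : Q) (a₁ : A) (v₁ : Q) (u₂ : Q) (a₂ : A) (v₂ : Q),
     M.trans u₁ a₁ = some v₁ → M.trans u₂ a₂ = some v₂ →
     (a₁ < a₂ → r v₁ v₂) ∧ (a₁ = a₂ → r u₁ u₂ → (r v₁ v₂ ∨ v₁ = v₂)))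

/-- A language is Wheeler (w.r.t. the given order on the alphabet) if it is
recognized by some Wheeler DFA. -/
def IsWheelerLang {A : Type} [LinearOrder A] (L : Set (List A)) : Prop :=
  ∃ (n : ℕ) (M : PDFA A (Fin n)) (r : Fin n → Fin n → Prop),
    IsWheelerOrder M r ∧ M.accepts = L

/-- A language is regular if it is recognized by some finite-state (partial) DFA. -/
def IsRegular {A : Type} (L : Set (List A)) : Prop :=
  ∃ (k : ℕ) (M : PDFA A (Fin k)), M.accepts = L

/-- The input-consistent convex refinement `≡^c_L` of the Myhill–Nerode
equivalence: same right context, same last character (or both empty), and every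
word of `Pref L` co-lexicographically between the two words has the same right
context. -/
def EquivC {A : Type} [LinearOrder A] (L : Set (List A)) (α β : List A) : Prop :=
  rc L α = rc L β ∧ α.getLast? = β.getLast? ∧
  ∀ γ ∈ Pref L,
    ((ColexLE α γ ∧ ColexLE γ β) ∨ (ColexLE β γ ∧ ColexLE γ α)) →
    rc L γ = rc L α

/-- An NFA with a single initial state. -/
structure NFA' (A : Type) (Q : Type) where
  init : Q
  trans : Q → A → Set Q
  accept : Q → Prop

/-- One step of an `NFA'` on a set of states. -/
def NFA'.stepSet {A Q : Type} (M : NFA' A Q) (S : Set Q) (a : A) : Set Q :=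
  {q | ∃ p ∈ S, q ∈ M.trans p a}

/-- Extended transition function of an `NFA'` on sets of states. -/
def NFA'.evalFrom {A Q : Type} (M : NFA' A Q) : Set Q → List A → Set Q
  | S, [] => S
  | S, a :: w => NFA'.evalFrom M (M.stepSet S a) w

/-- The language accepted by an `NFA'`. -/
def NFA'.accepts {A Q : Type} (M : NFA' A Q) : Set (List A) :=
  {w | ∃ q ∈ M.evalFrom {M.init} w, M.accept q}

/-- An `NFA'` is trim if every state is reachable from the initial state and
every state can reach some accepting state. -/
def NFA'.Trim {A Q : Type} (M : NFA' A Q) : Prop :=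
  (∀ q : Q, ∃ α, q ∈ M.evalFrom {M.init} α) ∧
  (∀ q : Q, ∃ α, ∃ q' ∈ M.evalFrom {q} α, M.accept q')

/-- `r` is a Wheeler order for the NFA `M`. -/
def IsWheelerNFAOrder {A Q : Type} [LinearOrder A] (M : NFA' A Q) (r : Q → Q → Prop) : Prop :=
  IsStrictTotalOrder Q r ∧
  (∀ q : Q, q ≠ M.init → r M.init q) ∧
  (∀ (q : Q) (a : A), M.init ∉ M.trans q a) ∧
  (∀ (u₁ : Q) (a₁ : A) (v₁ : Q) (u₂ : Q) (a₂ : A) (v₂ : Q),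
     v₁ ∈ M.trans u₁ a₁ → v₂ ∈ M.trans u₂ a₂ →
     (a₁ < a₂ → r v₁ v₂) ∧ (a₁ = a₂ → r u₁ u₂ → (r v₁ v₂ ∨ v₁ = v₂)))

/-- `I` is an interval with respect to the strict order `r`. -/
def IsIntervalRel {Q : Type} (r : Q → Q → Prop) (I : Set Q) : Prop :=
  ∀ x y z : Q, (r x y ∨ x = y) → (r y z ∨ y = z) → x ∈ I → z ∈ I → y ∈ I

/-- The class of star-free languages: built from `∅`, `{ε}` and the singletons
`{a}` by union, concatenation and complement. -/
inductive StarFree {A : Type} : Set (List A) → Prop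
  | empty : StarFree ∅
  | eps : StarFree {[]}
  | single (a : A) : StarFree {[a]}
  | union {L₁ L₂ : Set (List A)} : StarFree L₁ → StarFree L₂ → StarFree (L₁ ∪ L₂)
  | concat {L₁ L₂ : Set (List A)} : StarFree L₁ → StarFree L₂ →
      StarFree {w | ∃ u v, u ∈ L₁ ∧ v ∈ L₂ ∧ w = u ++ v}
  | compl {L : Set (List A)} : StarFree L → StarFree Lᶜ


/-- The language of all words over the sub-alphabet `S`. -/
def wordsOver {A : Type} (S : Set A) : Language A := {w | ∀ x ∈ w, x ∈ S}


section Statement5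

/-- `u` is a proper suffix of `v`: the relation between consecutive witness words. -/
def IsProperSuffix {A : Type*} (u v : List A) : Prop :=
  u <:+ v ∧ u ≠ v

theorem isProperSuffix_append {A : Type*} {u : List A} (hu : u ≠ []) (v : List A) :
    IsProperSuffix v (u ++ v) :=
  ⟨List.suffix_append u v, fun h => hu (List.self_eq_append_left.mp h)⟩

section LoopLang

variable {A : Type} {c d : A} {u v w γ : List A}

/-- The language `uγ*v`, with a single loop `γ`: both pieces of `L₀` have this form. -/
def loopLang (u γ v : List A) : Set (List A) :=
  {w | ∃ n : ℕ, w = u ++ wpow γ n ++ v}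

theorem eq_of_cons_mem_loopLang_cons (h : c :: w ∈ loopLang (d :: u) γ v) : c = d := by
  obtain ⟨n, hn⟩ := h
  exact List.head_eq_of_cons_eq hn

theorem eq_of_concat_mem_loopLang_concat (h : w ++ [c] ∈ loopLang u γ (v ++ [d])) : c = d := by
  obtain ⟨n, hn⟩ := h
  rw [← List.append_assoc] at hn
  exact List.singleton_inj.mp (List.append_inj_right' hn rfl)

end LoopLang

/-- combinatorial facts about the witness words for the
language `L₀ = a(aba)*a + ba(aba)*b`: suffix relations and distinct right
contexts. -/
theorem statement5 {A : Type} (a b : A) (hab : a ≠ b)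
    (L : Set (List A))
    (hL : L = {w | ∃ n : ℕ, w = [a] ++ wpow [a, b, a] n ++ [a]} ∪
              {w | ∃ n : ℕ, w = [b, a] ++ wpow [a, b, a] n ++ [b]}) :
    ∀ n : ℕ,
      (([a] ++ wpow [a, b, a] n) <:+ ([b, a] ++ wpow [a, b, a] n) ∧
        [a] ++ wpow [a, b, a] n ≠ [b, a] ++ wpow [a, b, a] n) ∧
      (([b, a] ++ wpow [a, b, a] n) <:+ ([a] ++ wpow [a, b, a] (n + 1)) ∧
        [b, a] ++ wpow [a, b, a] n ≠ [a] ++ wpow [a, b, a] (n + 1)) ∧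
      rc L ([a] ++ wpow [a, b, a] n) ≠ rc L ([b, a] ++ wpow [a, b, a] n) ∧
      ([a] ++ wpow [a, b, a] n ++ [a]) ∈ L ∧
      ([b, a] ++ wpow [a, b, a] n ++ [a]) ∉ L := by
  intro n
  have ha_mem : [a] ++ wpow [a, b, a] n ++ [a] ∈ L := by
    rw [hL]
    exact Or.inl ⟨n, rfl⟩
  have hba_notMem : [b, a] ++ wpow [a, b, a] n ++ [a] ∉ L := by
    rw [hL]
    rintro (h | h)
    · exact hab (eq_of_cons_mem_loopLang_cons h).symm
    · exact hab (eq_of_concat_mem_loopLang_concat (v := []) h)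
  refine ⟨?_, ?_, ?_, ha_mem, hba_notMem⟩
  · exact isProperSuffix_append (List.cons_ne_nil b []) ([a] ++ wpow [a, b, a] n)
  -- `a(aba)^(n+1) = aa · ba(aba)^n` holds by unfolding `wpow` once.
  · exact isProperSuffix_append (List.cons_ne_nil a [a]) ([b, a] ++ wpow [a, b, a] n)
  · exact ne_of_mem_of_not_mem' (a := [a]) ha_mem hba_notMem

end Statement5

end WheelerPaper
end

section
/- Let Σ be a finite alphabet, L ⊆ Σ* a language with ε ∈ L, and let c be a symbol not in Σ. Then L = Σ* if and only if (L·{c})*·L = (Σ ∪ {c})*, where both sides are languages over the alphabet Σ ∪ {c}. -/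
/-!
Common framework: words over an ordered alphabet, co-lexicographic order,
(partial) DFAs and NFAs, Wheeler automata and Wheeler languages,
following "Ordering regular languages: a danger zone".
-/

namespace WheelerPaper

section Statement6

open Computability

/-!
Splitting a word over `S ∪ T` at its letters from `T` is the denesting rule
`(a + b)∗ = (a∗ * b)∗ * a∗` of Kleene algebra, with `a` the letters of `S` and `b` those of `T`.
Conversely, intersecting with `wordsOver S` commutes with concatenation and Kleene star. If `S` and
`T` are disjoint, it sends `L * letters T` to `0`, and hence `(L * letters T)∗ * L` back to `L`.
-/

theorem kstar_add {α : Type*} [KleeneAlgebra α] (a b : α) : (a + b)∗ = (a∗ * b)∗ * a∗ := by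
  apply le_antisymm
  · refine kstar_le_of_mul_le_left (one_le_mul one_le_kstar one_le_kstar) ?_
    rw [mul_add]
    refine add_le ?_ ?_
    · grw [mul_assoc, kstar_mul_le_kstar]
    · calc (a∗ * b)∗ * a∗ * b = (a∗ * b)∗ * (a∗ * b) := mul_assoc ..
        _ ≤ (a∗ * b)∗ := kstar_mul_le_kstar
        _ ≤ (a∗ * b)∗ * a∗ := le_mul_of_one_le_right' one_le_kstar
  · have ha : a∗ ≤ (a + b)∗ := kstar_mono le_self_add
    have hb : b ≤ (a + b)∗ := le_add_self.trans le_kstar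
    refine kstar_mul_le ha ?_
    calc a∗ * b * (a + b)∗ ≤ (a + b)∗ * (a + b)∗ * (a + b)∗ :=
          mul_le_mul_left (mul_le_mul' ha hb) _
      _ = (a + b)∗ := by rw [kstar_mul_kstar, kstar_mul_kstar]

/-- The language of one-letter words with letter in `S`, that is, `S` regarded as a language. -/
def letters {A : Type*} (S : Set A) : Language A := (fun a => [a]) '' S

theorem letters_empty {A : Type*} : letters (∅ : Set A) = 0 := Set.image_empty _

theorem letters_singleton {A : Type*} (a : A) : letters {a} = {[a]} := Set.image_singleton

theorem letters_union {A : Type*} (S T : Set A) : letters (S ∪ T) = letters S + letters T :=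
  Set.image_union ..

section WordsOver

variable {A : Type} (S T : Set A)

theorem append_mem_wordsOver {S : Set A} {u v : List A} :
    u ++ v ∈ wordsOver S ↔ u ∈ wordsOver S ∧ v ∈ wordsOver S :=
  List.forall_mem_append

theorem flatten_mem_wordsOver {S : Set A} {l : List (List A)} :
    l.flatten ∈ wordsOver S ↔ ∀ w ∈ l, w ∈ wordsOver S :=
  List.forall_mem_flatten

theorem wordsOver_mono : Monotone (wordsOver : Set A → Language A) :=
  fun _ _ hST _ hw x hx => hST (hw x hx)

theorem kstar_letters : (letters S)∗ = wordsOver S := by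
  ext w
  rw [Language.mem_kstar]
  constructor
  · rintro ⟨l, rfl, hl⟩
    refine flatten_mem_wordsOver.2 fun u hu => ?_
    obtain ⟨a, ha, rfl⟩ := hl u hu
    exact List.forall_mem_singleton.2 ha
  · exact fun hw => ⟨w.map fun a => [a], by rw [← List.flatMap_def, List.flatMap_singleton'],
      List.forall_mem_map.2 fun a ha => Set.mem_image_of_mem _ (hw a ha)⟩

theorem wordsOver_union :
    wordsOver (S ∪ T) = (wordsOver S * letters T)∗ * wordsOver S := by
  simp only [← kstar_letters, letters_union, kstar_add]

theorem letters_inf_wordsOver : letters T ⊓ wordsOver S = letters (T ∩ S) := by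
  ext w
  constructor
  · rintro ⟨⟨a, haT, rfl⟩, haS⟩
    exact ⟨a, ⟨haT, List.forall_mem_singleton.1 haS⟩, rfl⟩
  · rintro ⟨a, ⟨haT, haS⟩, rfl⟩
    exact ⟨⟨a, haT, rfl⟩, List.forall_mem_singleton.2 haS⟩

theorem mul_inf_wordsOver (K M : Language A) :
    (K * M) ⊓ wordsOver S = (K ⊓ wordsOver S) * (M ⊓ wordsOver S) := by
  ext w
  constructor
  · rintro ⟨⟨u, hu, v, hv, rfl⟩, huv⟩
    obtain ⟨huS, hvS⟩ := append_mem_wordsOver.1 huv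
    exact ⟨u, ⟨hu, huS⟩, v, ⟨hv, hvS⟩, rfl⟩
  · rintro ⟨u, ⟨hu, huS⟩, v, ⟨hv, hvS⟩, rfl⟩
    exact ⟨⟨u, hu, v, hv, rfl⟩, append_mem_wordsOver.2 ⟨huS, hvS⟩⟩

theorem kstar_inf_wordsOver (K : Language A) : K∗ ⊓ wordsOver S = (K ⊓ wordsOver S)∗ := by
  ext w
  simp only [Language.mem_inf, Language.mem_kstar]
  constructor
  · rintro ⟨⟨l, rfl, hl⟩, hlS⟩
    exact ⟨l, rfl, fun u hu => ⟨hl u hu, flatten_mem_wordsOver.1 hlS u hu⟩⟩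
  · rintro ⟨l, rfl, hl⟩
    exact ⟨⟨l, rfl, fun u hu => (hl u hu).1⟩, flatten_mem_wordsOver.2 fun u hu => (hl u hu).2⟩

theorem kstar_mul_letters_mul_inf_wordsOver {S T : Set A} (hST : Disjoint S T) (L : Language A) :
    ((L * letters T)∗ * L) ⊓ wordsOver S = L ⊓ wordsOver S := by
  have hT : letters T ⊓ wordsOver S = 0 := by
    rw [letters_inf_wordsOver, hST.symm.inter_eq, letters_empty]
  rw [mul_inf_wordsOver, kstar_inf_wordsOver, mul_inf_wordsOver, hT, mul_zero, kstar_zero, one_mul]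

end WordsOver

theorem statement6_general {A : Type} {S T : Set A} (hST : Disjoint S T) {L : Language A}
    (hL : L ≤ wordsOver S) :
    L = wordsOver S ↔ (L * letters T)∗ * L = wordsOver (S ∪ T) := by
  constructor
  · rintro rfl
    exact (wordsOver_union S T).symm
  · intro h
    calc L = L ⊓ wordsOver S := (inf_eq_left.2 hL).symm
      _ = ((L * letters T)∗ * L) ⊓ wordsOver S := (kstar_mul_letters_mul_inf_wordsOver hST L).symm
      _ = wordsOver (S ∪ T) ⊓ wordsOver S := by rw [h]
      _ = wordsOver S := inf_eq_right.2 (wordsOver_mono Set.subset_union_left)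

/-- equation (1) of the paper: for `ε ∈ L ⊆ Σ*` and `c ∉ Σ`,
`L = Σ*` iff `(L·c)*·L = (Σ ∪ {c})*`. -/
theorem statement6 {A : Type} [Fintype A] (S : Set A) (c : A) (hc : c ∉ S)
    (L : Language A) (hsub : ∀ w ∈ L, ∀ x ∈ w, x ∈ S) (heps : [] ∈ L) :
    L = wordsOver S ↔ (L * {[c]})∗ * L = wordsOver (S ∪ {c}) := by
  rw [← letters_singleton]
  exact statement6_general (Set.disjoint_singleton_right.2 hc) hsub

end Statement6

end WheelerPaper
end

section
/- Let Σ be a finite alphabet, L ⊆ Σ* with ε ∈ L, and let a, b, c be three pairwise distinct symbols not in Σ. Define L'' = {a}·((L·{c})*·L) ∪ {b}·(Σ ∪ {c})* over the alphabet Σ ∪ {a,b,c}. Then for every n ≥ 0: (ac^n)⁻¹L'' = a⁻¹L'' and (bc^n)⁻¹L'' = b⁻¹L''. -/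
/-!
Common framework: words over an ordered alphabet, co-lexicographic order,
(partial) DFAs and NFAs, Wheeler automata and Wheeler languages,
following "Ordering regular languages: a danger zone".
-/

namespace WheelerPaper

section Statement7

open Computability

/-!
A language fixed by the left quotient by the letter `c` is fixed by the left quotient by every
power `c^n`. So it suffices that the left quotients of `L''` by single letters are fixed by `c`;
they are sums of `0`, `(L·{c})*·L` and `(Σ ∪ {c})*`. For the middle one,
`(L·{c})*·L = L + L·{c}·(L·{c})*·L`: since `L` contains `ε` and no word beginning with `c`, the
words of the right-hand side beginning with `c` are exactly those of `{c}·(L·{c})*·L`.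
-/

section LeftQuotient

variable {α : Type*} {K L : Language α} {c : α}

theorem leftQuotient_replicate_eq_self (hK : K.leftQuotient [c] = K) (n : ℕ) :
    K.leftQuotient (List.replicate n c) = K := by
  induction n with
  | zero => exact K.leftQuotient_nil
  | succ n ih =>
    rw [List.replicate_succ, ← List.singleton_append, Language.leftQuotient_append, hK, ih]

theorem leftQuotient_add (K M : Language α) (w : List α) :
    (K + M).leftQuotient w = K.leftQuotient w + M.leftQuotient w :=
  rfl

theorem leftQuotient_singleton_mul [DecidableEq α] (x y : α) (K : Language α) :
    ({[x]} * K).leftQuotient [y] = if y = x then K else 0 := by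
  ext w
  have hmem : w ∈ ({[x]} * K).leftQuotient [y] ↔ y = x ∧ w ∈ K := by
    constructor
    · rintro ⟨_, rfl, v, hv, huv⟩
      obtain ⟨rfl, rfl⟩ := List.cons.inj huv
      exact ⟨rfl, hv⟩
    · rintro ⟨rfl, hw⟩
      exact Language.append_mem_mul rfl hw
  rw [hmem]
  split_ifs with hyx <;> simp [hyx]

theorem leftQuotient_mul_of_nil_mem (hnil : [] ∈ L) (hL : L.leftQuotient [c] = 0)
    (M : Language α) : (L * M).leftQuotient [c] = M.leftQuotient [c] := by
  ext w
  constructor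
  · rintro ⟨u, hu, v, hv, huv⟩
    cases u with
    | nil =>
      obtain rfl : v = [c] ++ w := huv
      exact hv
    | cons y u =>
      obtain ⟨rfl, -⟩ := List.cons.inj huv
      have hu' : u ∈ L.leftQuotient [y] := hu
      rw [hL] at hu'
      exact absurd hu' (Language.notMem_zero u)
  · exact fun hw => ⟨[], hnil, [c] ++ w, hw, rfl⟩

theorem kstar_mul_self_eq_add (L M : Language α) :
    (L * M)∗ * L = L + L * (M * ((L * M)∗ * L)) := by
  conv_lhs => rw [← Language.one_add_self_mul_kstar_eq_kstar, add_mul, one_mul]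
  simp only [mul_assoc]

theorem leftQuotient_kstar_mul_self (hnil : [] ∈ L) (hL : L.leftQuotient [c] = 0) :
    ((L * {[c]})∗ * L).leftQuotient [c] = (L * {[c]})∗ * L := by
  classical
  conv_lhs => rw [kstar_mul_self_eq_add]
  rw [leftQuotient_add, hL, zero_add, leftQuotient_mul_of_nil_mem hnil hL,
    leftQuotient_singleton_mul, if_pos rfl]

end LeftQuotient

theorem leftQuotient_wordsOver {A : Type} {T : Set A} {c : A} (hc : c ∈ T) :
    (wordsOver T).leftQuotient [c] = wordsOver T := by
  ext w
  exact List.forall_mem_cons.trans (and_iff_right hc)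

theorem statement7_general {A : Type} {T : Set A} (a b : A) {c : A} (hc : c ∈ T)
    {L : Language A} (hL : ∀ w, c :: w ∉ L) (hnil : [] ∈ L) (x : A) (n : ℕ) :
    let L'' : Language A := {[a]} * ((L * {[c]})∗ * L) + {[b]} * wordsOver T
    rc L'' ([x] ++ List.replicate n c) = rc L'' [x] := by
  classical
  intro L''
  have hLc : L.leftQuotient [c] = 0 := Set.eq_empty_of_forall_notMem hL
  have hfixed : (L''.leftQuotient [x]).leftQuotient [c] = L''.leftQuotient [x] := by
    simp only [L'', leftQuotient_add, leftQuotient_singleton_mul]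
    congr 1
    · split_ifs
      exacts [leftQuotient_kstar_mul_self hnil hLc, rfl]
    · split_ifs
      exacts [leftQuotient_wordsOver hc, rfl]
  exact (L''.leftQuotient_append [x] _).trans (leftQuotient_replicate_eq_self hfixed n)

/-- in the language `L'' = a·((L·c)*·L) + b·(Σ ∪ {c})*`, the
words `ac^n` and `a` have the same right context, and so do `bc^n` and `b`. -/
theorem statement7 {A : Type} [Fintype A] (S : Set A) (a b c : A)
    (hab : a ≠ b) (hac : a ≠ c) (hbc : b ≠ c)
    (ha : a ∉ S) (hb : b ∉ S) (hc : c ∉ S)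
    (L : Language A) (hsub : ∀ w ∈ L, ∀ x ∈ w, x ∈ S) (heps : [] ∈ L)
    (L'' : Language A)
    (hL'' : L'' = {[a]} * ((L * {[c]})∗ * L) + {[b]} * wordsOver (S ∪ {c})) :
    ∀ n : ℕ,
      rc L'' ([a] ++ List.replicate n c) = rc L'' [a] ∧
      rc L'' ([b] ++ List.replicate n c) = rc L'' [b] := by
  have key := statement7_general (T := S ∪ {c}) a b (.inr rfl)
    (fun w hw => hc (hsub _ hw c List.mem_cons_self)) heps
  exact fun n => hL'' ▸ ⟨key a n, key b n⟩

end Statement7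

end WheelerPaper
end

section
/- Let Σ be a finite alphabet, L ⊆ Σ* with L ≠ Σ* and ε ∈ L, and let a, b, c be three pairwise distinct symbols not in Σ. Define L'' = {a}·((L·{c})*·L) ∪ {b}·(Σ ∪ {c})* over the alphabet Σ ∪ {a,b,c}. Then for all i, j ≥ 0: (ac^i)⁻¹L'' ≠ (bc^j)⁻¹L''. Indeed, for any α ∈ Σ* \ L, the word αc belongs to (bc^j)⁻¹L'' but not to (ac^i)⁻¹L''. -/
/-!
Common framework: words over an ordered alphabet, co-lexicographic order,
(partial) DFAs and NFAs, Wheeler automata and Wheeler languages,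
following "Ordering regular languages: a danger zone".
-/

namespace WheelerPaper

section Statement8

open Computability

/-! Since `c` occurs in no word of `L`, reading `u ++ [c]` with `c ∉ u` from `(L * {[c]})∗ * L`
leads back to that language if `u ∈ L`, and to the empty right context otherwise. Peeling off first
the letters of `c ^ i` (the case `u = []`) and then `α ++ [c]`, no word starting with `a c ^ i α c`
lies in `L''` when `α ∉ L`, whereas after `b` every word over `S ∪ {c}` is accepted. -/

theorem append_cons_inj_of_notMem {A : Type*} {c : A} {u v x y : List A}
    (hu : c ∉ u) (hv : c ∉ v) : u ++ c :: x = v ++ c :: y ↔ u = v ∧ x = y := by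
  constructor
  · intro h
    rcases List.append_eq_append_iff.1 h with ⟨d, rfl, h⟩ | ⟨d, rfl, h⟩ <;> cases d <;> simp_all
  · rintro ⟨rfl, rfl⟩
    rfl

theorem kstar_mul_eq_add_mul_kstar_mul {A : Type*} (K M : Language A) :
    K∗ * M = M + K * (K∗ * M) := by
  conv_lhs => rw [← Language.one_add_self_mul_kstar_eq_kstar, add_mul, one_mul, mul_assoc]

theorem cons_mem_singleton_mul_iff {A : Type*} {a d : A} {M : Language A} {w : List A} :
    d :: w ∈ {[a]} * M ↔ d = a ∧ w ∈ M := by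
  constructor
  · rintro ⟨_, rfl, v, hv, h⟩
    obtain ⟨rfl, rfl⟩ := List.cons.inj h
    exact ⟨rfl, hv⟩
  · rintro ⟨rfl, hw⟩
    exact ⟨[d], rfl, w, hw, rfl⟩

theorem append_cons_mem_mul_singleton_mul_iff {A : Type*} {c : A} {L N : Language A}
    (hL : ∀ w ∈ L, c ∉ w) {u x : List A} (hu : c ∉ u) :
    u ++ c :: x ∈ L * {[c]} * N ↔ u ∈ L ∧ x ∈ N := by
  rw [mul_assoc]
  constructor
  · rintro ⟨v, hv, _, ⟨_, rfl, y, hy, rfl⟩, h⟩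
    obtain ⟨rfl, rfl⟩ := (append_cons_inj_of_notMem (hL v hv) hu).1 h
    exact ⟨hv, hy⟩
  · rintro ⟨hu, hx⟩
    exact ⟨u, hu, c :: x, cons_mem_singleton_mul_iff.2 ⟨rfl, hx⟩, rfl⟩

theorem append_cons_mem_kstar_mul_iff {A : Type*} {c : A} {L M : Language A}
    (hL : ∀ w ∈ L, c ∉ w) (hM : ∀ w ∈ M, c ∉ w) {u x : List A} (hu : c ∉ u) :
    u ++ c :: x ∈ (L * {[c]})∗ * M ↔ u ∈ L ∧ x ∈ (L * {[c]})∗ * M := by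
  have notMem_M : u ++ c :: x ∉ M := fun h => hM _ h (by simp)
  rw [kstar_mul_eq_add_mul_kstar_mul, Language.mem_add, or_iff_right notMem_M,
    append_cons_mem_mul_singleton_mul_iff hL hu, ← kstar_mul_eq_add_mul_kstar_mul]

theorem mem_of_replicate_append_mem_kstar_mul {A : Type*} {c : A} {L M : Language A}
    (hL : ∀ w ∈ L, c ∉ w) (hM : ∀ w ∈ M, c ∉ w) {x : List A} (i : ℕ)
    (h : List.replicate i c ++ x ∈ (L * {[c]})∗ * M) : x ∈ (L * {[c]})∗ * M := by
  induction i with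
  | zero => exact h
  | succ i ih =>
    exact ih ((append_cons_mem_kstar_mul_iff hL hM List.not_mem_nil).1 h).2

theorem replicate_append_concat_notMem_kstar_mul {A : Type*} {c : A} {L M : Language A}
    (hL : ∀ w ∈ L, c ∉ w) (hM : ∀ w ∈ M, c ∉ w) {α : List A} (hcα : c ∉ α) (hαL : α ∉ L) (i : ℕ) :
    List.replicate i c ++ (α ++ [c]) ∉ (L * {[c]})∗ * M := fun h =>
  hαL ((append_cons_mem_kstar_mul_iff hL hM hcα).1
    (mem_of_replicate_append_mem_kstar_mul hL hM i h)).1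

theorem replicate_append_concat_mem_wordsOver {A : Type} {S : Set A} {α : List A}
    (hα : α ∈ wordsOver S) (c : A) (j : ℕ) :
    List.replicate j c ++ (α ++ [c]) ∈ wordsOver (S ∪ {c}) :=
  List.forall_mem_append.2 ⟨fun _ hx => Or.inr (List.eq_of_mem_replicate hx),
    List.forall_mem_append.2 ⟨fun x hx => Or.inl (hα x hx),
      fun _ hx => Or.inr (List.mem_singleton.1 hx)⟩⟩

theorem cons_mem_singleton_mul_add_iff {A : Type*} {a b : A} (hab : a ≠ b) {M N : Language A}
    {w : List A} : a :: w ∈ {[a]} * M + {[b]} * N ↔ w ∈ M := by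
  simp only [Language.mem_add, cons_mem_singleton_mul_iff, hab, true_and, false_and, or_false]

theorem statement8_general {A : Type} (S : Set A) (a b c : A) (hab : a ≠ b) (hc : c ∉ S)
    (L : Language A) (hsub : ∀ w ∈ L, ∀ x ∈ w, x ∈ S) (hne : L ≠ wordsOver S)
    (L'' : Language A)
    (hL'' : L'' = {[a]} * ((L * {[c]})∗ * L) + {[b]} * wordsOver (S ∪ {c})) :
    ∀ i j : ℕ,
      rc L'' ([a] ++ List.replicate i c) ≠ rc L'' ([b] ++ List.replicate j c) ∧
      ∀ α : List A, (∀ x ∈ α, x ∈ S) → α ∉ L →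
        (α ++ [c]) ∈ rc L'' ([b] ++ List.replicate j c) ∧
        (α ++ [c]) ∉ rc L'' ([a] ++ List.replicate i c) := by
  intro i j
  have c_notMem : ∀ w ∈ L, c ∉ w := fun w hw hcw => hc (hsub w hw c hcw)
  have a_cons_mem_iff (w : List A) : a :: w ∈ L'' ↔ w ∈ (L * {[c]})∗ * L := by
    rw [hL'', cons_mem_singleton_mul_add_iff hab]
  have b_cons_mem_iff (w : List A) : b :: w ∈ L'' ↔ w ∈ wordsOver (S ∪ {c}) := by
    rw [hL'', add_comm, cons_mem_singleton_mul_add_iff hab.symm]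
  have separates : ∀ α ∈ wordsOver S, α ∉ L →
      α ++ [c] ∈ rc L'' ([b] ++ List.replicate j c) ∧
      α ++ [c] ∉ rc L'' ([a] ++ List.replicate i c) := fun α hα hαL =>
    ⟨(b_cons_mem_iff _).2 (replicate_append_concat_mem_wordsOver hα c j),
      mt (a_cons_mem_iff _).1 <| replicate_append_concat_notMem_kstar_mul c_notMem c_notMem
        (fun hcα => hc (hα c hcα)) hαL i⟩
  refine ⟨fun heq => ?_, separates⟩
  obtain ⟨α, hα, hαL⟩ : ∃ α ∈ wordsOver S, α ∉ L :=
    Set.exists_of_ssubset (lt_of_le_of_ne (show L ≤ wordsOver S from hsub) hne)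
  obtain ⟨mem_b, notMem_a⟩ := separates α hα hαL
  exact notMem_a (heq.ge mem_b)

/-- if `ε ∈ L ⊊ Σ*` then in
`L'' = a·((L·c)*·L) + b·(Σ ∪ {c})*` the words `ac^i` and `bc^j` have distinct
right contexts, witnessed by `αc` for any `α ∈ Σ* \ L`. -/
theorem statement8 {A : Type} [Fintype A] (S : Set A) (a b c : A)
    (hab : a ≠ b) (hac : a ≠ c) (hbc : b ≠ c)
    (ha : a ∉ S) (hb : b ∉ S) (hc : c ∉ S)
    (L : Language A) (hsub : ∀ w ∈ L, ∀ x ∈ w, x ∈ S) (heps : [] ∈ L)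
    (hne : L ≠ wordsOver S)
    (L'' : Language A)
    (hL'' : L'' = {[a]} * ((L * {[c]})∗ * L) + {[b]} * wordsOver (S ∪ {c})) :
    ∀ i j : ℕ,
      rc L'' ([a] ++ List.replicate i c) ≠ rc L'' ([b] ++ List.replicate j c) ∧
      ∀ α : List A, (∀ x ∈ α, x ∈ S) → α ∉ L →
        (α ++ [c]) ∈ rc L'' ([b] ++ List.replicate j c) ∧
        (α ++ [c]) ∉ rc L'' ([a] ++ List.replicate i c) :=
  statement8_general S a b c hab hc L hsub hne L'' hL''

end Statement8

end WheelerPaper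
end

section
/- Let Σ' be a finite alphabet, let a, b ∈ Σ' be distinct, and let T = Σ' \ {a,b}. Then for every linear order ≺ on Σ', the language {a,b}·T* (all words whose first letter is a or b and whose remaining letters lie in T) is Wheeler with respect to (Σ',≺). -/
/-!
Common framework: words over an ordered alphabet, co-lexicographic order,
(partial) DFAs and NFAs, Wheeler automata and Wheeler languages,
following "Ordering regular languages: a danger zone".
-/

namespace WheelerPaper

section Statement10

/-!
The language `{a, b}·T*` is local: membership depends only on the first letter, on which letters
may follow one another, and on the last letter. A local language is recognized by the automaton
that remembers just the last letter read. In that automaton every transition reading `x` leads to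
the same state, so ordering the states by their letter satisfies the Wheeler conditions, whatever
the order on the alphabet.
-/

/-- The copy of the automaton `M` whose states are renamed along the bijection `e`. -/
def PDFA.reindex {A Q Q' : Type} (e : Q ≃ Q') (M : PDFA A Q) : PDFA A Q' where
  init := e M.init
  trans q x := (M.trans (e.symm q) x).map e
  accept q := M.accept (e.symm q)

theorem PDFA.trans_reindex_eq_some_iff {A Q Q' : Type} (e : Q ≃ Q') (M : PDFA A Q) {u v : Q'}
    {x : A} : (M.reindex e).trans u x = some v ↔ M.trans (e.symm u) x = some (e.symm v) := by
  simp only [PDFA.reindex, Option.map_eq_some_iff, ← Equiv.eq_symm_apply, exists_eq_right]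

theorem PDFA.evalFrom_reindex {A Q Q' : Type} (e : Q ≃ Q') (M : PDFA A Q) (q : Q) (w : List A) :
    (M.reindex e).evalFrom (e q) w = (M.evalFrom q w).map e := by
  induction w generalizing q with
  | nil => rfl
  | cons x w ih =>
    have htrans : (M.reindex e).trans (e q) x = (M.trans q x).map e := by
      simp only [PDFA.reindex, Equiv.symm_apply_apply]
    simp only [PDFA.evalFrom, htrans, Option.bind_map, Option.map_bind, Function.comp_def, ih]

theorem PDFA.accepts_reindex {A Q Q' : Type} (e : Q ≃ Q') (M : PDFA A Q) :
    (M.reindex e).accepts = M.accepts := by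
  ext w
  have heval : (M.reindex e).evalFrom (M.reindex e).init w = (M.evalFrom M.init w).map e :=
    M.evalFrom_reindex e M.init w
  have haccept (q : Q) : (M.reindex e).accept (e q) ↔ M.accept q := by
    simp only [PDFA.reindex, Equiv.symm_apply_apply]
  simp [PDFA.accepts, heval, ← haccept]

section Wheeler

variable {A Q Q' : Type} [LinearOrder A]

theorem IsWheelerOrder.reindex (e : Q ≃ Q') {M : PDFA A Q} {r : Q → Q → Prop}
    (h : IsWheelerOrder M r) : IsWheelerOrder (M.reindex e) (r.onFun e.symm) := by
  obtain ⟨_, hmin, hinit, hstep⟩ := h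
  refine ⟨e.symm.injective.isStrictTotalOrder_onFun (r := r), fun q hq => ?_, fun q x hq => ?_,
    fun u₁ x₁ v₁ u₂ x₂ v₂ h₁ h₂ => ?_⟩
  · have hne : e.symm q ≠ M.init := fun heq => hq (e.symm_apply_eq.mp heq)
    simpa [Function.onFun, PDFA.reindex] using hmin (e.symm q) hne
  · rw [PDFA.trans_reindex_eq_some_iff] at hq
    exact hinit _ x (by simpa [PDFA.reindex] using hq)
  · rw [PDFA.trans_reindex_eq_some_iff] at h₁ h₂
    simpa [Function.onFun] using hstep _ x₁ _ _ x₂ _ h₁ h₂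

theorem IsWheelerOrder.isWheelerLang_accepts [Finite Q] {M : PDFA A Q} {r : Q → Q → Prop}
    (h : IsWheelerOrder M r) : IsWheelerLang M.accepts := by
  obtain ⟨n, ⟨e⟩⟩ := Finite.exists_equiv_fin Q
  exact ⟨n, M.reindex e, r.onFun e.symm, h.reindex e, M.accepts_reindex e⟩

theorem isWheelerOrder_of_trans_eq_coe {M : PDFA A (WithBot A)} (hinit : M.init = ⊥)
    (htrans : ∀ u x v, M.trans u x = some v → v = x) : IsWheelerOrder M (· < ·) := by
  refine ⟨inferInstance, fun q hq => ?_, fun q x hq => ?_, fun u₁ x₁ v₁ u₂ x₂ v₂ h₁ h₂ => ?_⟩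
  · rw [hinit] at hq ⊢
    exact bot_lt_iff_ne_bot.mpr hq
  · exact WithBot.bot_ne_coe (hinit.symm.trans (htrans q x M.init hq))
  · obtain rfl := htrans u₁ x₁ v₁ h₁
    obtain rfl := htrans u₂ x₂ v₂ h₂
    exact ⟨WithBot.coe_lt_coe.mpr, fun heq _ => Or.inr (congrArg _ heq)⟩

end Wheeler

section Local

variable {A : Type} (I : Set A) (R : A → A → Prop) (F : Set (WithBot A))

/-- The local language of the words whose first letter is in `I`, whose consecutive letters are
related by `R`, and whose last letter is in `F`. The empty word has last letter `⊥`, so it belongs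
to the language iff `⊥ ∈ F`. -/
def localLanguage : Set (List A) :=
  {w | (∀ x ∈ w.head?, x ∈ I) ∧ w.IsChain R ∧ (w.map WithBot.some).getLastD ⊥ ∈ F}

theorem nil_mem_localLanguage_iff : [] ∈ localLanguage I R F ↔ ⊥ ∈ F := by
  simp [localLanguage]

theorem cons_mem_localLanguage_iff {c : A} {w : List A} :
    c :: w ∈ localLanguage I R F ↔
      c ∈ I ∧ (c :: w).IsChain R ∧ ((w.getLastD c : A) : WithBot A) ∈ F := by
  have hlast : ((c :: w).map WithBot.some).getLastD ⊥ = ((w.getLastD c : A) : WithBot A) := by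
    rw [List.map_cons, List.getLastD_cons, List.getLastD_map]
  simp only [localLanguage, Set.mem_ofPred_eq, hlast, List.head?_cons, Option.mem_some,
    forall_eq']

theorem setOf_cons_eq_localLanguage (S T : Set A) :
    {w | ∃ h t, w = h :: t ∧ h ∈ S ∧ ∀ x ∈ t, x ∈ T} =
      localLanguage S (fun _ x => x ∈ T) {⊥}ᶜ := by
  have hchain (c : A) (w : List A) : (c :: w).IsChain (fun _ x => x ∈ T) ↔ ∀ x ∈ w, x ∈ T := by
    induction w generalizing c with
    | nil => simp
    | cons x w ih => rw [List.isChain_cons_cons, ih, List.forall_mem_cons]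
  ext w
  cases w with
  | nil => simp [nil_mem_localLanguage_iff]
  | cons c w => simp [cons_mem_localLanguage_iff, hchain, ← and_assoc]

open Classical in
/-- The automaton recognizing `localLanguage I R F`: its state is the last letter read, or `⊥` at
the start. -/
noncomputable def lastLetterPDFA : PDFA A (WithBot A) where
  init := ⊥
  trans q x := if q.recBotCoe (x ∈ I) (fun y => R y x) then some (x : WithBot A) else none
  accept q := q ∈ F

theorem lastLetterPDFA_trans_eq_some_iff {q v : WithBot A} {x : A} :
    (lastLetterPDFA I R F).trans q x = some v ↔
      q.recBotCoe (x ∈ I) (fun y => R y x) ∧ (x : WithBot A) = v := by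
  simp only [lastLetterPDFA, Option.ite_none_right_eq_some, Option.some.injEq]

theorem lastLetterPDFA_evalFrom_coe_eq_some_iff {c : A} {w : List A} {q : WithBot A} :
    (lastLetterPDFA I R F).evalFrom c w = some q ↔
      (c :: w).IsChain R ∧ ((w.getLastD c : A) : WithBot A) = q := by
  induction w generalizing c with
  | nil => simp [PDFA.evalFrom]
  | cons x w ih =>
    simp only [PDFA.evalFrom, Option.bind_eq_some_iff, lastLetterPDFA_trans_eq_some_iff,
      WithBot.recBotCoe_coe, and_assoc, exists_and_left, exists_eq_left', ih,
      List.isChain_cons_cons, List.getLastD_cons]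

theorem lastLetterPDFA_accepts : (lastLetterPDFA I R F).accepts = localLanguage I R F := by
  ext w
  cases w with
  | nil => simp [PDFA.accepts, PDFA.evalFrom, nil_mem_localLanguage_iff, lastLetterPDFA]
  | cons x w =>
    have heval (q : WithBot A) :
        (lastLetterPDFA I R F).evalFrom (lastLetterPDFA I R F).init (x :: w) = some q ↔
          x ∈ I ∧ (x :: w).IsChain R ∧ ((w.getLastD x : A) : WithBot A) = q := by
      have hinit : (lastLetterPDFA I R F).init = ⊥ := rfl
      simp only [hinit, PDFA.evalFrom, Option.bind_eq_some_iff, lastLetterPDFA_trans_eq_some_iff,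
        WithBot.recBotCoe_bot, and_assoc, exists_and_left, exists_eq_left',
        lastLetterPDFA_evalFrom_coe_eq_some_iff]
    have haccept (q : WithBot A) : (lastLetterPDFA I R F).accept q ↔ q ∈ F := Iff.rfl
    simp only [PDFA.accepts, Set.mem_ofPred_eq, heval, haccept, cons_mem_localLanguage_iff,
      and_assoc, exists_and_left, exists_eq_left']

theorem statement10_general [Finite A] [LinearOrder A] : IsWheelerLang (localLanguage I R F) := by
  rw [← lastLetterPDFA_accepts]
  refine (isWheelerOrder_of_trans_eq_coe rfl fun u x v huv => ?_).isWheelerLang_accepts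
  exact ((lastLetterPDFA_trans_eq_some_iff I R F).mp huv).2.symm

end Local

/-- for distinct `a, b ∈ Σ'` and `T = Σ' \ {a,b}`, the
language `{a,b}·T*` is Wheeler with respect to every linear order on `Σ'`. -/
theorem statement10 {A : Type} [Fintype A] (a b : A) (hab : a ≠ b)
    (L : Set (List A))
    (hL : L = {w | ∃ (h : A) (t : List A),
                 w = h :: t ∧ (h = a ∨ h = b) ∧ ∀ x ∈ t, x ≠ a ∧ x ≠ b}) :
    ∀ inst : LinearOrder A, @IsWheelerLang A inst L := by
  intro _
  exact hL.trans (setOf_cons_eq_localLanguage {h | h = a ∨ h = b} {x | x ≠ a ∧ x ≠ b}) ▸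
    statement10_general ..

end Statement10

end WheelerPaper
end

section
/- Let A be a DFA over an ordered alphabet (Σ,≺) in which every state is reachable from the initial state. If <₁ and <₂ are two linear orders on the states of A each of which makes A a Wheeler DFA, then <₁ and <₂ coincide. In other words, a WDFA admits a unique order of its states that makes it Wheeler. -/
/-!
Common framework: words over an ordered alphabet, co-lexicographic order,
(partial) DFAs and NFAs, Wheeler automata and Wheeler languages,
following "Ordering regular languages: a danger zone".
-/

namespace WheelerPaper

section Statement11

/-!
A Wheeler order is forced by the words reaching the states: by induction on the last letters, the
Wheeler conditions carry the co-lexicographic order of two words over to the states they reach.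
As the co-lexicographic order on words is total, any choice of a word reaching each state determines
the order of the states.
-/

theorem not_colex_nil {A : Type} [LinearOrder A] (α : List A) : ¬ Colex α [] := by
  simp [Colex]

theorem colex_concat_concat_iff {A : Type} [LinearOrder A] {α β : List A} {a b : A} :
    Colex (α ++ [a]) (β ++ [b]) ↔ a < b ∨ a = b ∧ Colex α β := by
  simp [Colex, List.cons_lt_cons_iff]

theorem colex_trichotomy {A : Type} [LinearOrder A] (α β : List A) :
    Colex α β ∨ α = β ∨ Colex β α := by
  simpa only [Colex, List.reverse_inj] using
    trichotomous_of (List.Lex (· < · : A → A → Prop)) α.reverse β.reverse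

theorem PDFA.evalFrom_append {A Q : Type} (M : PDFA A Q) (q : Q) (α β : List A) :
    M.evalFrom q (α ++ β) = (M.evalFrom q α).bind fun p => M.evalFrom p β := by
  induction α generalizing q with
  | nil => rfl
  | cons a α ih => simp [PDFA.evalFrom, ih, Option.bind_assoc]

theorem PDFA.evalFrom_concat_eq_some_iff {A Q : Type} {M : PDFA A Q} {p q : Q} {α : List A}
    {a : A} :
    M.evalFrom p (α ++ [a]) = some q ↔ ∃ u, M.evalFrom p α = some u ∧ M.trans u a = some q := by
  simp [PDFA.evalFrom_append, PDFA.evalFrom, Option.bind_eq_some_iff]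

namespace IsWheelerOrder

variable {A Q : Type} [LinearOrder A] {M : PDFA A Q} {r : Q → Q → Prop}

theorem init_rel_or_eq (h : IsWheelerOrder M r) (q : Q) : r M.init q ∨ M.init = q :=
  (em (M.init = q)).symm.imp_left fun hq => h.2.1 q (Ne.symm hq)

theorem rel_of_lt (h : IsWheelerOrder M r) {u₁ v₁ u₂ v₂ : Q} {a₁ a₂ : A}
    (h₁ : M.trans u₁ a₁ = some v₁) (h₂ : M.trans u₂ a₂ = some v₂) (ha : a₁ < a₂) : r v₁ v₂ :=
  (h.2.2.2 u₁ a₁ v₁ u₂ a₂ v₂ h₁ h₂).1 ha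

theorem trans_mono (h : IsWheelerOrder M r) {u₁ v₁ u₂ v₂ : Q} {a : A}
    (h₁ : M.trans u₁ a = some v₁) (h₂ : M.trans u₂ a = some v₂) (hu : r u₁ u₂ ∨ u₁ = u₂) :
    r v₁ v₂ ∨ v₁ = v₂ := by
  obtain hu | rfl := hu
  · exact (h.2.2.2 u₁ a v₁ u₂ a v₂ h₁ h₂).2 rfl hu
  · exact .inr (Option.some_injective _ (h₁.symm.trans h₂))

theorem rel_or_eq_of_colex (h : IsWheelerOrder M r) {α β : List A} {u v : Q}
    (hu : M.evalFrom M.init α = some u) (hv : M.evalFrom M.init β = some v)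
    (hαβ : Colex α β) : r u v ∨ u = v := by
  induction α using List.reverseRecOn generalizing β u v with
  | nil =>
    obtain rfl : M.init = u := Option.some_injective _ hu
    exact h.init_rel_or_eq v
  | append_singleton α a ih =>
    obtain rfl | ⟨β, b, rfl⟩ := List.eq_nil_or_concat' β
    · exact absurd hαβ (not_colex_nil _)
    obtain ⟨u', hu', hu'u⟩ := PDFA.evalFrom_concat_eq_some_iff.mp hu
    obtain ⟨v', hv', hv'v⟩ := PDFA.evalFrom_concat_eq_some_iff.mp hv
    obtain hab | ⟨rfl, hlt⟩ := colex_concat_concat_iff.mp hαβ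
    · exact .inl (h.rel_of_lt hu'u hv'v hab)
    · exact h.trans_mono hu'u hv'v (ih hu' hv' hlt)

theorem rel_iff_ne_and_colex (h : IsWheelerOrder M r) {α β : List A} {u v : Q}
    (hu : M.evalFrom M.init α = some u) (hv : M.evalFrom M.init β = some v) :
    r u v ↔ u ≠ v ∧ Colex α β := by
  have : IsStrictTotalOrder Q r := h.1
  refine ⟨fun huv => ?_, fun ⟨hne, hαβ⟩ => (h.rel_or_eq_of_colex hu hv hαβ).resolve_right hne⟩
  have hne : u ≠ v := ne_of_irrefl huv
  refine ⟨hne, ?_⟩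
  obtain hαβ | rfl | hβα := colex_trichotomy α β
  · exact hαβ
  · exact absurd (Option.some_injective _ (hu.symm.trans hv)) hne
  · have hvu : r v u := (h.rel_or_eq_of_colex hv hu hβα).resolve_right hne.symm
    exact absurd hvu (asymm huv)

end IsWheelerOrder

theorem statement11_general {A Q : Type} [LinearOrder A] (M : PDFA A Q)
    (hreach : ∀ q : Q, ∃ α : List A, M.evalFrom M.init α = some q)
    (r₁ r₂ : Q → Q → Prop) (h₁ : IsWheelerOrder M r₁) (h₂ : IsWheelerOrder M r₂) :
    r₁ = r₂ := by
  ext u v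
  obtain ⟨α, hα⟩ := hreach u
  obtain ⟨β, hβ⟩ := hreach v
  exact (h₁.rel_iff_ne_and_colex hα hβ).trans (h₂.rel_iff_ne_and_colex hα hβ).symm

/-- a DFA whose states are all reachable admits at most one
Wheeler order on its states. -/
theorem statement11 {A Q : Type} [LinearOrder A] [Fintype Q]
    (M : PDFA A Q)
    (hreach : ∀ q : Q, ∃ α : List A, M.evalFrom M.init α = some q)
    (r₁ r₂ : Q → Q → Prop)
    (h₁ : IsWheelerOrder M r₁) (h₂ : IsWheelerOrder M r₂) :
    r₁ = r₂ :=
  statement11_general M hreach r₁ r₂ h₁ h₂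

end Statement11

end WheelerPaper
end

section
/- Let (A,<) be a WNFA over (Σ,≺) with n states, initial state q₀, recognizing L = L(A). Then the powerset (subset-construction) determinization of A, restricted to its reachable states, is a DFA recognizing L with at most 2n states (i.e., the number of distinct nonempty sets δ(q₀,α) for α ∈ Pref(L) is at most 2n), and this DFA is itself Wheeler with respect to (Σ,≺) under a suitable linear order of its states. -/
/-!
Common framework: words over an ordered alphabet, co-lexicographic order,
(partial) DFAs and NFAs, Wheeler automata and Wheeler languages,
following "Ordering regular languages: a danger zone".
-/

namespace WheelerPaper

/-!
The sets `δ(q₀, α)` form a chain: if `u ∈ δ(q₀, α)` and `v ∈ δ(q₀, β)` are in inverted order,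
`v < u`, while `α` is co-lexicographically at most `β`, then both states lie in both sets. Indeed,
the Wheeler axioms force `α` and `β` to end in the same letter and carry the inversion back to
predecessors of `u` and `v`, unless these coincide, and then there is nothing to prove. The
same two axioms show that reading a letter preserves the resulting order of sets, so the
determinization is Wheeler.

Along the chain, both the set of elements below some member and the set of elements strictly below
all members grow weakly, and one of them grows strictly. The first is never empty, so the sum of
their sizes takes at most `2n` values.
-/

section SetComparison

variable {Q : Type*} [LinearOrder Q] {I J K : Set Q}

/-- Comparison of sets of states: `I` comes before `J` if the inversions between them, the pairs
`u ∈ I`, `v ∈ J` with `v < u`, occur only inside `I ∩ J`. Unlike a comparison of endpoints, this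
requires neither finiteness nor convexity. It is transitive and antisymmetric on nonempty sets. -/
def SetLE (I J : Set Q) : Prop :=
  ∀ u ∈ I, ∀ v ∈ J, v < u → u ∈ J ∧ v ∈ I

/-- The strict comparison of sets of states associated with `SetLE`. -/
def SetLT (I J : Set Q) : Prop :=
  SetLE I J ∧ I ≠ J

instance SetLE.instRefl : Std.Refl (SetLE (Q := Q)) :=
  ⟨fun _ _ hu _ hv _ ↦ ⟨hu, hv⟩⟩

theorem SetLE.of_forall_le (h : ∀ u ∈ I, ∀ v ∈ J, u ≤ v) : SetLE I J :=
  fun u hu v hv hvu ↦ absurd hvu (h u hu v hv).not_gt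

theorem SetLT.of_forall_lt (hI : I.Nonempty) (h : ∀ u ∈ I, ∀ v ∈ J, u < v) : SetLT I J := by
  refine ⟨.of_forall_le fun u hu v hv ↦ (h u hu v hv).le, ?_⟩
  rintro rfl
  obtain ⟨u, hu⟩ := hI
  exact lt_irrefl u (h u hu u hu)

theorem SetLE.trans (hJ : J.Nonempty) (hIJ : SetLE I J) (hJK : SetLE J K) : SetLE I K := by
  intro u hu w hw hwu
  have huJ : u ∈ J := by
    obtain ⟨v, hv⟩ := hJ
    rcases lt_trichotomy v u with hvu | rfl | huv
    · exact (hIJ u hu v hv hvu).1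
    · exact hv
    · have hwJ : w ∈ J := (hJK v hv w hw (hwu.trans huv)).2
      exact (hIJ u hu w hwJ hwu).1
  obtain ⟨huK, hwJ⟩ := hJK u huJ w hw hwu
  exact ⟨huK, (hIJ u hu w hwJ hwu).2⟩

theorem SetLE.lowerClosure_le (h : SetLE I J) (hJ : J.Nonempty) :
    lowerClosure I ≤ lowerClosure J := by
  refine _root_.lowerClosure_le.2 fun u hu ↦ ?_
  obtain ⟨v, hv⟩ := hJ
  rcases le_or_gt u v with huv | hvu
  · exact ⟨v, hv, huv⟩
  · exact subset_lowerClosure (h u hu v hv hvu).1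

theorem SetLE.upperClosure_le (h : SetLE I J) (hI : I.Nonempty) :
    upperClosure I ≤ upperClosure J := by
  refine le_upperClosure.2 fun v hv ↦ ?_
  obtain ⟨u, hu⟩ := hI
  rcases le_or_gt u v with huv | hvu
  · exact ⟨u, hu, huv⟩
  · exact subset_upperClosure (h u hu v hv hvu).2

theorem SetLE.eq_of_closures_eq (h : SetLE I J) (hlower : lowerClosure I = lowerClosure J)
    (hupper : upperClosure I = upperClosure J) : I = J := by
  refine Set.Subset.antisymm (fun u hu ↦ ?_) fun v hv ↦ ?_
  · obtain ⟨v, hv, hvu⟩ : u ∈ upperClosure J := hupper ▸ subset_upperClosure hu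
    rcases hvu.eq_or_lt with rfl | hvu
    · exact hv
    · exact (h u hu v hv hvu).1
  · obtain ⟨u, hu, hvu⟩ : v ∈ lowerClosure I := hlower ▸ subset_lowerClosure hv
    rcases hvu.eq_or_lt with rfl | hvu
    · exact hu
    · exact (h u hu v hv hvu).2

theorem SetLE.antisymm (hI : I.Nonempty) (hJ : J.Nonempty) (hIJ : SetLE I J) (hJI : SetLE J I) :
    I = J :=
  hIJ.eq_of_closures_eq (le_antisymm (hIJ.lowerClosure_le hJ) (hJI.lowerClosure_le hI))
    (le_antisymm (hIJ.upperClosure_le hI) (hJI.upperClosure_le hJ))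

theorem isStrictTotalOrder_setLT {S : Set (Set Q)} (hne : ∀ I ∈ S, I.Nonempty)
    (hS : IsChain SetLE S) :
    IsStrictTotalOrder S fun I J : S ↦ SetLT (I : Set Q) J where
  trichotomous I J hIJ hJI := by
    by_contra hdistinct
    have hcoe : (I : Set Q) ≠ J := Subtype.coe_ne_coe.2 hdistinct
    rcases hS.total I.2 J.2 with h | h
    · exact hIJ ⟨h, hcoe⟩
    · exact hJI ⟨h, hcoe.symm⟩
  irrefl _ h := h.2 rfl
  trans I J K hIJ hJK := by
    refine ⟨hIJ.1.trans (hne J J.2) hJK.1, fun hIK ↦ hIJ.2 ?_⟩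
    exact hIJ.1.antisymm (hne I I.2) (hne J J.2) (hIK ▸ hJK.1)

/-- The number of elements below some element of `I` plus the number of elements strictly below
all elements of `I`. Its role is to number the sets of a chain for `SetLE`; it is meaningful only
for finite `Q`, as `Set.ncard` is `0` on infinite sets. -/
noncomputable def setRank (I : Set Q) : ℕ :=
  (lowerClosure I : Set Q).ncard + ((upperClosure I : Set Q)ᶜ).ncard

theorem SetLT.setRank_lt [Finite Q] (h : SetLT I J) (hI : I.Nonempty) (hJ : J.Nonempty) :
    setRank I < setRank J := by
  have hlower : (lowerClosure I : Set Q) ⊆ lowerClosure J := h.1.lowerClosure_le hJ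
  have hupper : ((upperClosure I : Set Q)ᶜ) ⊆ (upperClosure J : Set Q)ᶜ :=
    Set.compl_subset_compl.2 (h.1.upperClosure_le hI)
  by_cases heq : lowerClosure I = lowerClosure J
  · have hupper_ne : ((upperClosure I : Set Q)ᶜ) ≠ (upperClosure J : Set Q)ᶜ := fun h' ↦
      h.2 (h.1.eq_of_closures_eq heq (SetLike.coe_injective (compl_injective h')))
    exact add_lt_add_of_le_of_lt (Set.ncard_le_ncard hlower)
      (Set.ncard_lt_ncard (hupper.ssubset_of_ne hupper_ne))
  · exact add_lt_add_of_lt_of_le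
      (Set.ncard_lt_ncard (hlower.ssubset_of_ne (SetLike.coe_injective.ne heq)))
      (Set.ncard_le_ncard hupper)

theorem setRank_mem_Icc [Finite Q] (hI : I.Nonempty) :
    setRank I ∈ Set.Icc 1 (2 * Nat.card Q) := by
  have hpos : 0 < (lowerClosure I : Set Q).ncard :=
    (Set.ncard_pos (Set.toFinite _)).2 (hI.mono subset_lowerClosure)
  have hlower := Set.ncard_le_card (lowerClosure I : Set Q)
  have hupper := Set.ncard_le_card ((upperClosure I : Set Q)ᶜ)
  simp only [setRank, Set.mem_Icc]
  lia

theorem injOn_setRank [Finite Q] {S : Set (Set Q)} (hne : ∀ I ∈ S, I.Nonempty)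
    (hS : IsChain SetLE S) : Set.InjOn setRank S := by
  intro I hI J hJ heq
  by_contra hIJ
  rcases hS.total hI hJ with h | h
  · exact (SetLT.setRank_lt ⟨h, hIJ⟩ (hne I hI) (hne J hJ)).ne heq
  · exact (SetLT.setRank_lt ⟨h, Ne.symm hIJ⟩ (hne J hJ) (hne I hI)).ne' heq

theorem encard_le_two_mul_card {S : Set (Set Q)} (hne : ∀ I ∈ S, I.Nonempty)
    (hS : IsChain SetLE S) : S.encard ≤ 2 * ENat.card Q := by
  cases finite_or_infinite Q with
  | inl _ =>
    calc S.encard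
      _ ≤ (Set.Icc 1 (2 * Nat.card Q)).encard :=
        Set.encard_le_encard_of_injOn (fun I hI ↦ setRank_mem_Icc (hne I hI))
          (injOn_setRank hne hS)
      _ = 2 * ENat.card Q := by
        simp [Set.encard_eq_coe_toFinset_card, ENat.card_eq_coe_natCard]
  | inr _ => simp [ENat.card_eq_top_of_infinite]

end SetComparison

section Evaluation

variable {A Q : Type}

theorem mem_Pref_of_append {L : Set (List A)} {α β : List A} (h : α ++ β ∈ Pref L) :
    α ∈ Pref L := by
  obtain ⟨γ, hγ⟩ := h
  exact ⟨β ++ γ, by rwa [← List.append_assoc]⟩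

theorem subset_Pref (L : Set (List A)) : L ⊆ Pref L :=
  fun α hα ↦ ⟨[], by rwa [List.append_nil]⟩

namespace PDFA

theorem evalFrom_append_s15 (D : PDFA A Q) (q : Q) (v w : List A) :
    D.evalFrom q (v ++ w) = (D.evalFrom q v).bind fun p ↦ D.evalFrom p w := by
  induction v generalizing q with
  | nil => rfl
  | cons a v ih => simp only [List.cons_append, evalFrom, ih, Option.bind_assoc]

theorem evalFrom_append_singleton (D : PDFA A Q) (q : Q) (w : List A) (a : A) :
    D.evalFrom q (w ++ [a]) = (D.evalFrom q w).bind fun p ↦ D.trans p a := by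
  simp only [evalFrom_append_s15, evalFrom, Option.bind_fun_some]

end PDFA

namespace NFA'

variable (M : NFA' A Q)

theorem evalFrom_append_s15 (P : Set Q) (v w : List A) :
    M.evalFrom P (v ++ w) = M.evalFrom (M.evalFrom P v) w := by
  induction v generalizing P with
  | nil => rfl
  | cons a _ ih => exact ih _

theorem evalFrom_append_singleton (P : Set Q) (w : List A) (a : A) :
    M.evalFrom P (w ++ [a]) = M.stepSet (M.evalFrom P w) a :=
  M.evalFrom_append_s15 P w [a]

theorem evalFrom_empty (w : List A) : M.evalFrom ∅ w = ∅ := by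
  induction w with
  | nil => rfl
  | cons a w ih => simpa [evalFrom, stepSet] using ih

theorem evalFrom_nonempty_of_mem_Pref {α : List A} (hα : α ∈ Pref M.accepts) :
    (M.evalFrom {M.init} α).Nonempty := by
  obtain ⟨β, q, hq, -⟩ := hα
  by_contra hempty
  rw [evalFrom_append_s15, Set.not_nonempty_iff_eq_empty.1 hempty, evalFrom_empty] at hq
  exact hq

theorem mem_Pref_accepts_congr {α β : List A}
    (h : M.evalFrom {M.init} α = M.evalFrom {M.init} β) :
    α ∈ Pref M.accepts ↔ β ∈ Pref M.accepts := by
  simp only [Pref, accepts, Set.mem_ofPred_eq, evalFrom_append_s15, h]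

/-- The states of the powerset determinization: the nonempty sets of states reached by reading
a prefix of an accepted word. -/
def powersetStates : Set (Set Q) :=
  {P | P.Nonempty ∧ ∃ α ∈ Pref M.accepts, M.evalFrom {M.init} α = P}

theorem evalFrom_mem_powersetStates_iff {α : List A} :
    M.evalFrom {M.init} α ∈ M.powersetStates ↔ α ∈ Pref M.accepts := by
  constructor
  · rintro ⟨-, β, hβ, heq⟩
    exact (M.mem_Pref_accepts_congr heq).1 hβ
  · exact fun hα ↦ ⟨M.evalFrom_nonempty_of_mem_Pref hα, α, hα, rfl⟩

theorem singleton_init_mem_powersetStates (hL : M.accepts.Nonempty) :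
    {M.init} ∈ M.powersetStates := by
  obtain ⟨w, hw⟩ := hL
  exact M.evalFrom_mem_powersetStates_iff (α := []).2 ⟨w, hw⟩

open Classical in
/-- The powerset determinization of `M`. A transition leading out of `M.powersetStates` is left
undefined. Nonemptiness of the language is what makes `{M.init}` a state. -/
noncomputable def powersetPDFA (hL : M.accepts.Nonempty) : PDFA A M.powersetStates where
  init := ⟨{M.init}, M.singleton_init_mem_powersetStates hL⟩
  trans P a := if h : M.stepSet P a ∈ M.powersetStates then some ⟨M.stepSet P a, h⟩ else none
  accept P := ∃ q ∈ (P : Set Q), M.accept q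

variable {M} (hL : M.accepts.Nonempty)

theorem powersetPDFA_trans_eq_some_iff {P P' : M.powersetStates} {a : A} :
    (M.powersetPDFA hL).trans P a = some P' ↔ M.stepSet P a = P' := by
  constructor
  · intro h
    simp only [powersetPDFA, Option.dite_none_right_eq_some, Option.some.injEq] at h
    exact congrArg Subtype.val h.2
  · intro h
    simp [powersetPDFA, h]

theorem powersetPDFA_evalFrom_eq_some_iff {w : List A} {P : M.powersetStates} :
    (M.powersetPDFA hL).evalFrom (M.powersetPDFA hL).init w = some P ↔
      M.evalFrom {M.init} w = P := by
  induction w using List.reverseRecOn generalizing P with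
  | nil => simp [PDFA.evalFrom, evalFrom, powersetPDFA, Subtype.ext_iff]
  | append_singleton w a ih =>
    simp only [PDFA.evalFrom_append_singleton, Option.bind_eq_some_iff, ih,
      powersetPDFA_trans_eq_some_iff, evalFrom_append_singleton]
    constructor
    · rintro ⟨P', hP', hP⟩
      rw [hP', hP]
    · intro hP
      have hwa : w ++ [a] ∈ Pref M.accepts := by
        rw [← M.evalFrom_mem_powersetStates_iff, evalFrom_append_singleton, hP]
        exact P.2
      exact ⟨⟨_, M.evalFrom_mem_powersetStates_iff.2 (mem_Pref_of_append hwa)⟩, rfl, hP⟩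

theorem powersetPDFA_accepts : (M.powersetPDFA hL).accepts = M.accepts := by
  ext w
  constructor
  · rintro ⟨P, hP, q, hqP, hq⟩
    rw [powersetPDFA_evalFrom_eq_some_iff] at hP
    exact ⟨q, hP ▸ hqP, hq⟩
  · intro hw
    have hmem := M.evalFrom_mem_powersetStates_iff.2 (subset_Pref _ hw)
    exact ⟨⟨_, hmem⟩, (powersetPDFA_evalFrom_eq_some_iff hL).2 rfl, hw⟩

end NFA'

end Evaluation

namespace IsWheelerNFAOrder

variable {A Q : Type} [LinearOrder A] [LinearOrder Q] {M : NFA' A Q}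
  (hM : IsWheelerNFAOrder M (· < ·))

include hM

theorem init_le (q : Q) : M.init ≤ q := by
  rcases eq_or_ne q M.init with rfl | hq
  · exact le_rfl
  · exact (hM.2.1 q hq).le

theorem init_notMem_stepSet (P : Set Q) (a : A) : M.init ∉ M.stepSet P a := by
  rintro ⟨p, -, hp⟩
  exact hM.2.2.1 p a hp

theorem lt_of_mem_stepSet {I J : Set Q} {a b : A} (hab : a < b) :
    ∀ u ∈ M.stepSet I a, ∀ v ∈ M.stepSet J b, u < v := by
  rintro u ⟨p, -, hpu⟩ v ⟨q, -, hqv⟩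
  exact (hM.2.2.2 p a u q b v hpu hqv).1 hab

theorem le_of_mem_trans {p q u v : Q} {a : A} (hu : u ∈ M.trans p a) (hv : v ∈ M.trans q a)
    (hpq : p < q) : u ≤ v :=
  ((hM.2.2.2 p a u q a v hu hv).2 rfl hpq).elim le_of_lt le_of_eq

theorem setLE_singleton_init (J : Set Q) : SetLE {M.init} J := by
  refine .of_forall_le fun u hu v _ ↦ ?_
  rw [Set.mem_singleton_iff.1 hu]
  exact hM.init_le v

theorem setLE_stepSet {I J : Set Q} (h : SetLE I J) (a : A) :
    SetLE (M.stepSet I a) (M.stepSet J a) := by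
  rintro u ⟨p, hpI, hpu⟩ v ⟨q, hqJ, hqv⟩ hvu
  have hqp : q ≤ p := not_lt.1 fun hpq ↦ hvu.not_ge (hM.le_of_mem_trans hpu hqv hpq)
  obtain ⟨hpJ, hqI⟩ : p ∈ J ∧ q ∈ I := by
    rcases hqp.eq_or_lt with rfl | hqp
    · exact ⟨hqJ, hpI⟩
    · exact h p hpI q hqJ hqp
  exact ⟨⟨p, hpJ, hpu⟩, ⟨q, hqI, hqv⟩⟩

theorem setLE_evalFrom_total (α β : List A) :
    SetLE (M.evalFrom {M.init} α) (M.evalFrom {M.init} β) ∨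
      SetLE (M.evalFrom {M.init} β) (M.evalFrom {M.init} α) := by
  have setLE_of_lt {I J : Set Q} {a b : A} (hab : a < b) :
      SetLE (M.stepSet I a) (M.stepSet J b) :=
    .of_forall_le fun u hu v hv ↦ (hM.lt_of_mem_stepSet hab u hu v hv).le
  induction α using List.reverseRecOn generalizing β with
  | nil => exact .inl (hM.setLE_singleton_init _)
  | append_singleton α a ih =>
    cases β using List.reverseRecOn with
    | nil => exact .inr (hM.setLE_singleton_init _)
    | append_singleton β b =>
      simp only [NFA'.evalFrom_append_singleton]
      rcases lt_trichotomy a b with hab | rfl | hba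
      · exact .inl (setLE_of_lt hab)
      · exact (ih β).imp (hM.setLE_stepSet · a) (hM.setLE_stepSet · a)
      · exact .inr (setLE_of_lt hba)

theorem isChain_powersetStates : IsChain SetLE M.powersetStates := by
  rintro _ ⟨-, α, -, rfl⟩ _ ⟨-, β, -, rfl⟩ -
  exact hM.setLE_evalFrom_total α β

theorem isWheelerOrder_powersetPDFA (hL : M.accepts.Nonempty) :
    IsWheelerOrder (M.powersetPDFA hL)
      fun P P' : M.powersetStates ↦ SetLT (P : Set Q) P' := by
  refine ⟨isStrictTotalOrder_setLT (fun _ hP ↦ hP.1) hM.isChain_powersetStates, ?_, ?_, ?_⟩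
  · exact fun P hP ↦ ⟨hM.setLE_singleton_init P, Subtype.coe_ne_coe.2 hP.symm⟩
  · intro P a htrans
    rw [NFA'.powersetPDFA_trans_eq_some_iff] at htrans
    exact hM.init_notMem_stepSet P a (htrans ▸ Set.mem_singleton M.init)
  · intro P a P₁ R b R₁ hP hR
    rw [NFA'.powersetPDFA_trans_eq_some_iff] at hP hR
    constructor
    · intro hab
      exact .of_forall_lt P₁.2.1 (hP ▸ hR ▸ hM.lt_of_mem_stepSet hab)
    · rintro rfl hPR
      have hle : SetLE (P₁ : Set Q) R₁ := hP ▸ hR ▸ hM.setLE_stepSet hPR.1 a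
      exact or_iff_not_imp_right.2 fun hne ↦ ⟨hle, Subtype.coe_ne_coe.2 hne⟩

end IsWheelerNFAOrder

theorem statement15_general {A Q : Type} [LinearOrder A] (M : NFA' A Q) (r : Q → Q → Prop)
    (hW : IsWheelerNFAOrder M r) (hL : M.accepts.Nonempty) :
    M.powersetStates.encard ≤ 2 * ENat.card Q ∧
    ∃ (D : PDFA A M.powersetStates) (r' : M.powersetStates → M.powersetStates → Prop),
      IsWheelerOrder D r' ∧ D.accepts = M.accepts ∧
      (D.init : Set Q) = {M.init} ∧
      (∀ P : M.powersetStates, D.accept P ↔ ∃ q ∈ (P : Set Q), M.accept q) ∧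
      (∀ (P P' : M.powersetStates) (a : A), D.trans P a = some P' →
        (P' : Set Q) = M.stepSet (P : Set Q) a) ∧
      (∀ (P : M.powersetStates) (a : A), M.stepSet (P : Set Q) a ∈ M.powersetStates →
        ∃ P' : M.powersetStates, D.trans P a = some P') := by
  classical
  have := hW.1
  let _ : LinearOrder Q := linearOrderOfSTO r
  have hM : IsWheelerNFAOrder M (· < ·) := hW
  refine ⟨encard_le_two_mul_card (fun _ hP ↦ hP.1) hM.isChain_powersetStates,
    M.powersetPDFA hL, _, hM.isWheelerOrder_powersetPDFA hL, M.powersetPDFA_accepts hL, rfl,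
    fun _ ↦ Iff.rfl, fun P P' a h ↦ ?_, fun P a h ↦ ⟨⟨_, h⟩, ?_⟩⟩
  · exact ((NFA'.powersetPDFA_trans_eq_some_iff hL).1 h).symm
  · exact (NFA'.powersetPDFA_trans_eq_some_iff hL).2 rfl

section Statement15

/-- the powerset determinization of a trim Wheeler NFA with
`n` states, restricted to the (nonempty) reachable subsets, is a Wheeler DFA
recognizing the same language with at most `2n` states. -/
theorem statement15 {A Q : Type} [LinearOrder A] [Fintype Q]
    (M : NFA' A Q) (r : Q → Q → Prop) (hW : IsWheelerNFAOrder M r)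
    (htrim : M.Trim) (n : ℕ) (hn : Fintype.card Q = n)
    (L : Set (List A)) (hL : L = M.accepts)
    (S : Set (Set Q))
    (hS : S = {P | P.Nonempty ∧ ∃ α ∈ Pref L, M.evalFrom {M.init} α = P}) :
    S.ncard ≤ 2 * n ∧
    ∃ (D : PDFA A S) (r' : S → S → Prop),
      IsWheelerOrder D r' ∧ D.accepts = L ∧
      (D.init : Set Q) = {M.init} ∧
      (∀ P : S, D.accept P ↔ ∃ q ∈ (P : Set Q), M.accept q) ∧
      (∀ (P P' : S) (a : A), D.trans P a = some P' →
        (P' : Set Q) = M.stepSet (P : Set Q) a) ∧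
      (∀ (P : S) (a : A), M.stepSet (P : Set Q) a ∈ S →
        ∃ P' : S, D.trans P a = some P') := by
  subst hn hL hS
  obtain ⟨hcard, hD⟩ := statement15_general M r hW (htrim.2 M.init)
  exact ⟨ENat.toNat_le_of_le_natCast (by simpa [NFA'.powersetStates] using hcard), hD⟩

end Statement15

end WheelerPaper
end

section
/- Every generalized Wheeler language is star-free: if L ⊆ Σ* is Wheeler with respect to some linear order ≺ on Σ, then L belongs to the class of star-free languages over Σ. -/
/-!
Common framework: words over an ordered alphabet, co-lexicographic order,
(partial) DFAs and NFAs, Wheeler automata and Wheeler languages,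
following "Ordering regular languages: a danger zone".
-/

namespace WheelerPaper

/-!
Reading words backwards, the automaton acts on cuts (lower sets of states) by preimage. Wheelerness
says that the transition function is monotone for the lexicographic order on letter-state pairs,
so this action is monotone on a finite chain, and a cut has a nontrivial preimage under at most one
letter. Hence, for a nontrivial cut, the words of a given length that pull it back to a nontrivial
cut coincide: a run between nontrivial cuts is a loop followed by one fixed word, and two loops at
the same cut commute. Conversely, a monotone map of a chain has no nontrivial cycles, so every
word commuting with a nonempty loop is a loop. The loops are therefore the words commuting
with one fixed word, and these are star-free because commuting is a periodicity condition.
-/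

section StarFreeClosure

variable {A : Type}

theorem StarFree.univ : StarFree (Set.univ : Set (List A)) :=
  Set.compl_empty (α := List A) ▸ StarFree.empty.compl

theorem StarFree.inter {L₁ L₂ : Set (List A)} (h₁ : StarFree L₁) (h₂ : StarFree L₂) :
    StarFree (L₁ ∩ L₂) := by
  simpa only [Set.compl_union, compl_compl] using (h₁.compl.union h₂.compl).compl

theorem StarFree.diff {L₁ L₂ : Set (List A)} (h₁ : StarFree L₁) (h₂ : StarFree L₂) :
    StarFree (L₁ \ L₂) :=
  h₁.inter h₂.compl

theorem StarFree.biUnion {ι : Type*} {s : Set ι} (hs : s.Finite) {L : ι → Set (List A)}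
    (hL : ∀ i ∈ s, StarFree (L i)) : StarFree (⋃ i ∈ s, L i) := by
  induction s, hs using Set.Finite.induction_on with
  | empty => simpa only [Set.biUnion_empty] using StarFree.empty
  | @insert i s _ _ ih =>
    rw [Set.biUnion_insert]
    exact (hL i (s.mem_insert i)).union (ih fun j hj => hL j (s.mem_insert_of_mem i hj))

theorem StarFree.singleton (u : List A) : StarFree {u} := by
  induction u with
  | nil => exact .eps
  | cons a u ih => simpa using (StarFree.single a).concat ih

theorem starFree_of_finite {L : Set (List A)} (hL : L.Finite) : StarFree L :=
  Set.biUnion_of_singleton L ▸ StarFree.biUnion hL fun u _ => .singleton u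

theorem StarFree.markedConcat {L₁ L₂ : Set (List A)} (h₁ : StarFree L₁) (a : A)
    (h₂ : StarFree L₂) : StarFree {w | ∃ x ∈ L₁, ∃ y ∈ L₂, w = x ++ a :: y} := by
  convert h₁.concat ((StarFree.single a).concat h₂) using 1
  ext w
  simp

theorem starFree_setOf_prefix (u : List A) : StarFree {w | u <+: w} := by
  convert (StarFree.singleton u).concat .univ using 1
  ext w
  simp [List.IsPrefix, eq_comm]

theorem starFree_setOf_suffix (u : List A) : StarFree {w | u <:+ w} := by
  convert StarFree.univ.concat (.singleton u) using 1
  ext w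
  simp [List.IsSuffix, eq_comm]

end StarFreeClosure

section Centralizer

variable {A : Type}

theorem not_hasPeriod_succ_iff {w : List A} {m : ℕ} :
    ¬ w.HasPeriod (m + 1) ↔
      ∃ a b, a ≠ b ∧ ∃ x y z, y.length = m ∧ w = x ++ a :: (y ++ b :: z) := by
  rw [List.hasPeriod_iff_getElem?]
  constructor
  · intro h
    push Not at h
    obtain ⟨i, hi, hne⟩ := h
    have hlen : i + (m + 1) < w.length := by omega
    refine ⟨w[i], w[i + (m + 1)], ?_, w.take i, (w.drop (i + 1)).take m,
      w.drop (i + (m + 1) + 1), ?_, ?_⟩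
    · simpa [List.getElem?_eq_getElem hlen, List.getElem?_eq_getElem (show i < w.length by omega)]
        using hne
    · rw [List.length_take, List.length_drop]
      omega
    · have hdrop : (w.drop (i + 1)).drop m = w[i + (m + 1)] :: w.drop (i + (m + 1) + 1) := by
        rw [List.drop_drop, show i + 1 + m = i + (m + 1) by omega, List.drop_eq_getElem_cons hlen]
      rw [← hdrop, List.take_append_drop, ← List.drop_eq_getElem_cons, List.take_append_drop]
  · rintro ⟨a, b, hab, x, y, z, rfl, rfl⟩ h
    exact hab (by simpa using h x.length (by simp; omega))

theorem starFree_setOf_hasPeriod [Finite A] (p : ℕ) : StarFree {w : List A | w.HasPeriod p} := by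
  obtain _ | m := p
  · simpa only [List.hasPeriod_zero, Set.ofPred_true] using StarFree.univ
  suffices h : StarFree {w : List A | ¬ w.HasPeriod (m + 1)} by
    simpa only [Set.compl_ofPred, not_not] using h.compl
  have hlen : StarFree {y : List A | y.length = m} := starFree_of_finite (List.finite_length_eq A m)
  convert StarFree.biUnion (Set.toFinite {p : A × A | p.1 ≠ p.2}) fun p _ =>
    StarFree.univ.markedConcat p.1 (hlen.markedConcat p.2 .univ) using 1
  ext w
  simp [not_hasPeriod_succ_iff]

theorem append_comm_iff_of_length_le {u w : List A} (h : u.length ≤ w.length) :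
    u ++ w = w ++ u ↔ u <+: w ∧ u <:+ w ∧ w.HasPeriod u.length := by
  constructor
  · intro hcomm
    have hpre : u <+: w :=
      List.prefix_of_prefix_length_le (u.prefix_append w) (hcomm ▸ w.prefix_append u) h
    have hsuf : u <:+ w :=
      List.suffix_of_suffix_length_le (w.suffix_append u) (hcomm ▸ u.suffix_append w) h
    refine ⟨hpre, hsuf, ?_⟩
    rw [List.HasPeriod, ← List.prefix_iff_eq_take.1 hpre, hcomm]
    exact w.prefix_append u
  · rintro ⟨hpre, ⟨t, rfl⟩, hper⟩
    rw [List.HasPeriod, ← List.prefix_iff_eq_take.1 hpre] at hper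
    obtain ⟨v, hv⟩ := hper
    have hlen : v.length = u.length := by
      have := congrArg List.length hv
      simp only [List.length_append] at this
      omega
    have hvu : v = u := (List.append_inj' (hv.trans (List.append_assoc u t u).symm) hlen).2
    rw [← hv, hvu]

theorem starFree_centralizer [Finite A] (u : List A) : StarFree {w | u ++ w = w ++ u} := by
  have hshort : StarFree {w | w.length < u.length ∧ u ++ w = w ++ u} :=
    starFree_of_finite ((List.finite_length_lt A u.length).subset fun _ hw => hw.1)
  have hlong : StarFree {w | u <+: w ∧ u <:+ w ∧ w.HasPeriod u.length} :=
    (starFree_setOf_prefix u).inter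
      ((starFree_setOf_suffix u).inter (starFree_setOf_hasPeriod u.length))
  convert hshort.union hlong using 1
  ext w
  rcases lt_or_ge w.length u.length with h | h
  · have hpre : ¬ u <+: w := fun hp => hp.length_le.not_gt h
    simp [h, hpre]
  · simp [h.not_gt, append_comm_iff_of_length_le h]

end Centralizer

section Unbranched

variable {A : Type} {K : Type*} {f : A → K → K} {k k' : K}

theorem length_freeMonoid_pow (u : FreeMonoid A) (n : ℕ) : (u ^ n).length = n * u.length := by
  induction n with
  | zero => simp
  | succ n ih => rw [pow_succ, FreeMonoid.length_mul, ih, Nat.succ_mul]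

theorem pow_length_eq_pow_length_of_commute {u z : FreeMonoid A} (h : Commute u z) :
    u ^ z.length = z ^ u.length := by
  have hlen : (u ^ z.length).length = (z ^ u.length).length := by
    rw [length_freeMonoid_pow, length_freeMonoid_pow, Nat.mul_comm]
  exact (List.append_inj (h.pow_pow z.length u.length) hlen).1

theorem foldr_eq_self_of_append_comm [LinearOrder K] (hf : ∀ a, Monotone (f a)) {u z : List A}
    (hu : u ≠ []) (hcomm : u ++ z = z ++ u) (hk : u.foldr f k = k) : z.foldr f k = k := by
  let _ := FreeMonoid.mkMulAction f
  let U := FreeMonoid.ofList u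
  let Z := FreeMonoid.ofList z
  have hiter : (Z • · : K → K)^[u.length] k = id^[u.length] k := calc
    (Z • · : K → K)^[u.length] k = (U • · : K → K)^[z.length] k := by
      rw [smul_iterate, smul_iterate]
      exact congrArg (· • k) (pow_length_eq_pow_length_of_commute (u := U) (z := Z) hcomm).symm
    _ = id^[u.length] k := by
      rw [Function.iterate_id]
      exact Function.iterate_fixed hk z.length
  exact (Function.Commute.id_right.iterate_pos_eq_iff_map_eq (List.foldr_monotone hf z)
    strictMono_id (List.length_pos_of_ne_nil hu)).1 hiter

/-- States from which a family of maps cannot move; such a state plays the role of a sink. -/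
def IsAbsorbing (f : A → K → K) (k : K) : Prop :=
  ∀ a, f a k = k

/-- A deterministic transition structure whose graph does not branch once the edges into
absorbing states are discarded. -/
def Unbranched (f : A → K → K) : Prop :=
  ∀ ⦃k a b⦄, ¬ IsAbsorbing f (f a k) → ¬ IsAbsorbing f (f b k) → a = b

theorem IsAbsorbing.foldr_eq_self (hk : IsAbsorbing f k) (w : List A) : w.foldr f k = k := by
  induction w with
  | nil => rfl
  | cons a w ih => rw [List.foldr_cons, ih, hk a]

theorem not_isAbsorbing_foldr_of_append {x y : List A}
    (h : ¬ IsAbsorbing f ((x ++ y).foldr f k)) : ¬ IsAbsorbing f (y.foldr f k) := by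
  intro hy
  rw [List.foldr_append, hy.foldr_eq_self] at h
  exact h hy

theorem Unbranched.eq_of_length_eq (hf : Unbranched f) {x y : List A}
    (hlen : x.length = y.length) (hx : ¬ IsAbsorbing f (x.foldr f k))
    (hy : ¬ IsAbsorbing f (y.foldr f k)) : x = y := by
  induction x generalizing y with
  | nil => exact (List.length_eq_zero_iff.1 hlen.symm).symm
  | cons a x ih =>
    obtain _ | ⟨b, y⟩ := y
    · simp at hlen
    obtain rfl := ih (Nat.succ.inj hlen) (not_isAbsorbing_foldr_of_append (x := [a]) hx)
      (not_isAbsorbing_foldr_of_append (x := [b]) hy)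
    rw [hf hx hy]

theorem Unbranched.starFree_setOf_foldr_eq_self [Finite A] [LinearOrder K] (hf : Unbranched f)
    (hmono : ∀ a, Monotone (f a)) (hk : ¬ IsAbsorbing f k) :
    StarFree {w : List A | w.foldr f k = k} := by
  by_cases hloop : ∃ u : List A, u ≠ [] ∧ u.foldr f k = k
  · obtain ⟨u, hu, huk⟩ := hloop
    convert starFree_centralizer u using 1
    ext w
    refine ⟨fun hw => ?_, fun hw => foldr_eq_self_of_append_comm hmono hu hw huk⟩
    replace hw : w.foldr f k = k := hw
    exact hf.eq_of_length_eq (k := k) (by simp [Nat.add_comm])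
      (by rwa [List.foldr_append, hw, huk]) (by rwa [List.foldr_append, huk, hw])
  · convert StarFree.singleton ([] : List A) using 1
    ext w
    exact ⟨fun hw => not_not.1 fun hne => hloop ⟨w, hne, hw⟩, fun hw => hw ▸ rfl⟩

theorem Unbranched.starFree_setOf_foldr_eq_of_not_isAbsorbing [Finite A] [LinearOrder K]
    (hf : Unbranched f) (hmono : ∀ a, Monotone (f a)) (hk' : ¬ IsAbsorbing f k') :
    StarFree {w : List A | w.foldr f k = k'} := by
  by_cases hpath : ∃ u : List A, u.foldr f k = k'
  · obtain ⟨u, huk, hmin⟩ := exists_minimalFor_of_wellFoundedLT _ List.length hpath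
    convert (hf.starFree_setOf_foldr_eq_self hmono hk').concat (.singleton u) using 1
    ext w
    constructor
    · intro hw
      replace hw : w.foldr f k = k' := hw
      have hlen : u.length ≤ w.length := le_of_not_gt fun h => h.not_ge (hmin hw h.le)
      obtain ⟨x, y, rfl, hy⟩ : ∃ x y, w = x ++ y ∧ y.length = u.length :=
        ⟨_, _, (w.take_append_drop (w.length - u.length)).symm, by rw [List.length_drop]; omega⟩
      obtain rfl : y = u := hf.eq_of_length_eq hy
        (not_isAbsorbing_foldr_of_append (x := x) (by rwa [hw])) (by rwa [huk])
      rw [List.foldr_append, huk] at hw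
      exact ⟨x, y, hw, rfl, rfl⟩
    · rintro ⟨x, _, hx, rfl, rfl⟩
      exact (List.foldr_append ..).trans (huk ▸ hx)
  · convert StarFree.empty (A := A) using 1
    exact Set.eq_empty_iff_forall_notMem.2 fun w hw => hpath ⟨w, hw⟩

theorem IsAbsorbing.foldr_eq_iff (hk' : IsAbsorbing f k') {w : List A} :
    w.foldr f k = k' ↔ k = k' ∨ ∃ a q, (¬ IsAbsorbing f q ∧ f a q = k') ∧
      ∃ x y, y.foldr f k = q ∧ w = x ++ a :: y := by
  constructor
  · induction w with
    | nil => exact Or.inl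
    | cons a w ih =>
      intro hw
      by_cases hq : IsAbsorbing f (w.foldr f k)
      · refine (ih ((hq a).symm.trans hw)).imp_right ?_
        rintro ⟨b, q, hbq, x, y, hy, rfl⟩
        exact ⟨b, q, hbq, a :: x, y, hy, rfl⟩
      · exact Or.inr ⟨a, _, ⟨hq, hw⟩, [], w, rfl, rfl⟩
  · rintro (rfl | ⟨a, _, ⟨-, rfl⟩, x, y, rfl, rfl⟩)
    · exact hk'.foldr_eq_self w
    · rw [List.foldr_append]
      exact hk'.foldr_eq_self x

theorem Unbranched.starFree_setOf_foldr_eq [Finite A] [LinearOrder K] [Finite K]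
    (hf : Unbranched f) (hmono : ∀ a, Monotone (f a)) (k k' : K) :
    StarFree {w : List A | w.foldr f k = k'} := by
  by_cases hk' : IsAbsorbing f k'
  swap
  · exact hf.starFree_setOf_foldr_eq_of_not_isAbsorbing hmono hk'
  have hstay : StarFree {_w : List A | k = k'} := by
    by_cases h : k = k'
    · simpa only [h, Set.ofPred_true] using StarFree.univ
    · simpa only [h, Set.ofPred_false] using StarFree.empty
  have henter := StarFree.biUnion
    (Set.toFinite {p : A × K | ¬ IsAbsorbing f p.2 ∧ f p.1 p.2 = k'}) fun p hp =>
      StarFree.univ.markedConcat p.1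
        (hf.starFree_setOf_foldr_eq_of_not_isAbsorbing (k := k) hmono hp.1)
  convert hstay.union henter using 1
  ext w
  simp [hk'.foldr_eq_iff]

theorem Unbranched.starFree_setOf_foldr_mem [Finite A] [LinearOrder K] [Finite K]
    (hf : Unbranched f) (hmono : ∀ a, Monotone (f a)) (k : K) (s : Set K) :
    StarFree {w : List A | w.foldr f k ∈ s} := by
  convert StarFree.biUnion s.toFinite fun k' _ => hf.starFree_setOf_foldr_eq hmono k k' using 1
  ext w
  simp

end Unbranched

section CompleteAutomaton

variable {A : Type} {Q : Type*} [LinearOrder A] [LinearOrder Q]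

/-- The state reached from `q` by reading `w` in the complete automaton with transition
function `δ`. The lexicographic order, with letters first, makes monotonicity of `δ` the
conjunction of the two Wheeler conditions, the first one with a weak inequality. -/
def run (δ : A ×ₗ Q →o Q) (q : Q) (w : List A) : Q :=
  w.foldl (fun p a => δ (toLex (a, p))) q

/-- The preimage of a cut of the state order, encoded as a lower set, under the transition with
letter `a`. -/
def cutPreimage (δ : A ×ₗ Q →o Q) (a : A) (S : LowerSet Q) : LowerSet Q where
  carrier := {q | δ (toLex (a, q)) ∈ S}
  lower' := fun _ _ hle => S.lower (δ.monotone (Prod.Lex.toLex_le_toLex.2 (.inr ⟨rfl, hle⟩)))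

variable (δ : A ×ₗ Q →o Q)

theorem mem_foldr_cutPreimage {w : List A} {S : LowerSet Q} {q : Q} :
    q ∈ w.foldr (cutPreimage δ) S ↔ run δ q w ∈ S := by
  induction w generalizing q with
  | nil => rfl
  | cons _ _ ih => exact ih

theorem monotone_cutPreimage (a : A) : Monotone (cutPreimage δ a) :=
  fun _ _ hle _ hmem => hle hmem

theorem isAbsorbing_cutPreimage_bot : IsAbsorbing (cutPreimage δ) ⊥ :=
  fun _ => rfl

theorem isAbsorbing_cutPreimage_top : IsAbsorbing (cutPreimage δ) ⊤ :=
  fun _ => rfl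

theorem exists_mem_and_exists_notMem_of_not_isAbsorbing {a : A} {S : LowerSet Q}
    (h : ¬ IsAbsorbing (cutPreimage δ) (cutPreimage δ a S)) :
    (∃ q, δ (toLex (a, q)) ∈ S) ∧ ∃ q, δ (toLex (a, q)) ∉ S := by
  refine ⟨not_forall_not.1 fun hnone => h ?_, not_forall.1 fun hall => h ?_⟩
  · have hbot : cutPreimage δ a S = ⊥ := LowerSet.ext (Set.eq_empty_of_forall_notMem hnone)
    exact hbot ▸ isAbsorbing_cutPreimage_bot δ
  · have htop : cutPreimage δ a S = ⊤ := LowerSet.ext (Set.eq_univ_of_forall hall)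
    exact htop ▸ isAbsorbing_cutPreimage_top δ

theorem unbranched_cutPreimage : Unbranched (cutPreimage δ) := by
  intro S a b ha hb
  obtain ⟨⟨pa, hpa⟩, qa, hqa⟩ := exists_mem_and_exists_notMem_of_not_isAbsorbing δ ha
  obtain ⟨⟨pb, hpb⟩, qb, hqb⟩ := exists_mem_and_exists_notMem_of_not_isAbsorbing δ hb
  rcases lt_trichotomy a b with hab | hab | hab
  · exact absurd (S.lower (δ.monotone (Prod.Lex.toLex_le_toLex.2 (.inl hab))) hpb) hqa
  · exact hab
  · exact absurd (S.lower (δ.monotone (Prod.Lex.toLex_le_toLex.2 (.inl hab))) hpa) hqb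

variable [Finite A] [Finite Q]

theorem starFree_setOf_run_mem (q : Q) (S : LowerSet Q) :
    StarFree {w | run δ q w ∈ S} := by
  convert (unbranched_cutPreimage δ).starFree_setOf_foldr_mem (monotone_cutPreimage δ) S
    {T | q ∈ T} using 1
  exact Set.ext fun _ => (mem_foldr_cutPreimage δ).symm

theorem starFree_setOf_run_eq (p q : Q) : StarFree {w | run δ p w = q} := by
  convert (starFree_setOf_run_mem δ p (.Iic q)).diff (starFree_setOf_run_mem δ p (.Iio q)) using 1
  ext w
  simp [eq_iff_le_not_lt]

end CompleteAutomaton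

section PartialAutomaton

variable {A Q : Type}

/-- Monotonicity of the partial transition function for the lexicographic order on letter-state
pairs: the Wheeler conditions on transitions, the first one with a weak inequality, and no
requirement on the initial state. -/
def PDFA.LexMonotone [LinearOrder A] [LinearOrder Q] (M : PDFA A Q) : Prop :=
  ∀ ⦃a₁ u₁ v₁ a₂ u₂ v₂⦄, M.trans u₁ a₁ = some v₁ → M.trans u₂ a₂ = some v₂ →
    toLex (a₁, u₁) ≤ toLex (a₂, u₂) → v₁ ≤ v₂

theorem IsWheelerOrder.lexMonotone [LinearOrder A] [LinearOrder Q] {M : PDFA A Q}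
    (h : IsWheelerOrder M (· < ·)) : M.LexMonotone := by
  intro a₁ u₁ v₁ a₂ u₂ v₂ h₁ h₂ hle
  obtain ⟨hlt, heq⟩ := h.2.2.2 u₁ a₁ v₁ u₂ a₂ v₂ h₁ h₂
  rcases Prod.Lex.toLex_le_toLex.1 hle with ha | ⟨ha, hu⟩
  · exact (hlt ha).le
  · rcases hu.lt_or_eq with hu | hu
    · exact (heq ha hu).elim le_of_lt le_of_eq
    · obtain rfl : a₁ = a₂ := ha
      obtain rfl : u₁ = u₂ := hu
      exact (Option.some.inj (h₁.symm.trans h₂)).le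

theorem PDFA.LexMonotone.exists_extension [LinearOrder A] [LinearOrder Q] [Finite Q]
    {M : PDFA A Q} (h : M.LexMonotone) :
    ∃ δ : A ×ₗ Q →o Q, ∀ q a q', M.trans q a = some q' → δ (toLex (a, q)) = q' := by
  have := Fintype.ofFinite Q
  have : Nonempty Q := ⟨M.init⟩
  let _ := Fintype.toCompleteLinearOrderOfNonempty Q
  let next (x : A ×ₗ Q) : Q := (M.trans (ofLex x).2 (ofLex x).1).getD M.init
  have hnext : MonotoneOn next {x | ∃ q, M.trans (ofLex x).2 (ofLex x).1 = some q} := by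
    rintro x ⟨v₁, h₁⟩ y ⟨v₂, h₂⟩ hxy
    simpa only [next, h₁, h₂, Option.getD_some] using h h₁ h₂ hxy
  obtain ⟨δ, hδ, heq⟩ := hnext.exists_monotone_extension (Set.toFinite _).bddBelow
    (Set.toFinite _).bddAbove
  refine ⟨⟨δ, hδ⟩, fun q a q' hq => ?_⟩
  have hval : next (toLex (a, q)) = q' := by simp only [next, ofLex_toLex, hq, Option.getD_some]
  exact (heq (x := toLex (a, q)) ⟨q', hq⟩).symm.trans hval

theorem PDFA.evalFrom_eq_some_iff_of_extends [LinearOrder A] [LinearOrder Q] {M : PDFA A Q}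
    {δ : A ×ₗ Q →o Q} (hδ : ∀ q a q', M.trans q a = some q' → δ (toLex (a, q)) = q') {w : List A}
    {q q' : Q} : M.evalFrom q w = some q' ↔
      run δ q w = q' ∧ ¬ ∃ a x y, M.trans (run δ q x) a = none ∧ w = x ++ a :: y := by
  induction w generalizing q with
  | nil => simp [PDFA.evalFrom, run]
  | cons a w ih =>
    rcases hq : M.trans q a with _ | p
    · simp only [PDFA.evalFrom, hq, Option.bind_none, reduceCtorEq, false_iff]
      exact fun h => h.2 ⟨a, [], w, hq, rfl⟩
    · have hcons {x} : run δ q (a :: x) = run δ p x := hδ q a p hq ▸ rfl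
      rw [PDFA.evalFrom, hq, Option.bind_some, ih, hcons]
      refine and_congr_right' (not_congr ⟨?_, ?_⟩)
      · rintro ⟨b, x, y, hb, rfl⟩
        exact ⟨b, a :: x, y, hcons ▸ hb, rfl⟩
      · rintro ⟨b, _ | ⟨c, x⟩, y, hb, hw⟩
        · obtain ⟨rfl, -⟩ := List.cons.inj hw
          cases hq.symm.trans hb
        · obtain ⟨rfl, rfl⟩ := List.cons.inj hw
          exact ⟨b, x, y, hcons ▸ hb, rfl⟩

theorem statement16_general [Finite A] [LinearOrder A] [Finite Q] [LinearOrder Q]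
    {M : PDFA A Q} (h : M.LexMonotone) : StarFree M.accepts := by
  obtain ⟨δ, hδ⟩ := h.exists_extension
  have haccept := StarFree.biUnion (Set.toFinite {q | M.accept q}) fun q _ =>
    starFree_setOf_run_eq δ M.init q
  have hstuck := StarFree.biUnion (Set.toFinite {p : Q × A | M.trans p.1 p.2 = none}) fun p _ =>
    (starFree_setOf_run_eq δ M.init p.1).markedConcat p.2 .univ
  convert haccept.diff hstuck using 1
  ext w
  simp [PDFA.accepts, PDFA.evalFrom_eq_some_iff_of_extends hδ, and_comm]

end PartialAutomaton

section Statement16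

/-- every generalized Wheeler language (Wheeler with respect
to some linear order of the alphabet) is star-free. -/
theorem statement16 {A : Type} [Fintype A] (L : Set (List A))
    (h : ∃ inst : LinearOrder A, @IsWheelerLang A inst L) :
    StarFree L := by
  classical
  obtain ⟨_, n, M, r, hr, rfl⟩ := h
  have := hr.1
  let _ : LinearOrder (Fin n) := linearOrderOfSTO r
  exact statement16_general (IsWheelerOrder.lexMonotone (Q := Fin n) hr)

end Statement16

end WheelerPaper
end

section
/- Let L ⊆ Σ* be Wheeler with respect to (Σ,≺), and let β₁ ≺ β₂ ≺ … ≺ β_m be words of Pref(L), sorted co-lexicographically, that form a fingerprint of L: they are pairwise inequivalent under ≡^c_L and every ≡^c_L-class contains some β_i. Then for every γ ∈ Pref(L) and every index s < m with β_s ⪯ γ ⪯ β_{s+1}, either γ ≡^c_L β_s or γ ≡^c_L β_{s+1}. -/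
/-!
Common framework: words over an ordered alphabet, co-lexicographic order,
(partial) DFAs and NFAs, Wheeler automata and Wheeler languages,
following "Ordering regular languages: a danger zone".
-/

namespace WheelerPaper

/-!
Reversing words turns the co-lexicographic order into the lexicographic linear order on lists, and
the last character of a word becomes the head of a list, which is a monotone function. Hence a
`≡^c_L`-class is convex within `Pref L`. Given consecutive indices `i` and `j`, the representative
of the class of `γ` is some `β k` with `k ≤ i` or `j ≤ k`, so that `β i` or `β j` lies between
`β k` and `γ`, and convexity applies.
-/

section ListHead

variable {B : Type*}

/-- The head of a list, valued in `WithBot B` rather than `Option B` so that it can be compared in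
the order of `B` extended by a least element for the empty list. -/
def headWithBot : List B → WithBot B
  | [] => ⊥
  | b :: _ => b

theorem headWithBot_eq_iff_head?_eq {l l' : List B} :
    headWithBot l = headWithBot l' ↔ l.head? = l'.head? := by
  cases l <;> cases l' <;> simp [headWithBot]

theorem headWithBot_monotone [LinearOrder B] : Monotone (headWithBot : List B → WithBot B)
  | [], _, _ => bot_le
  | _ :: _, [], h => absurd h (not_le_of_gt List.Lex.nil)
  | _ :: _, _ :: _, h =>
    WithBot.coe_le_coe.2 (le_of_not_gt fun hlt ↦ not_le_of_gt (List.Lex.rel hlt) h)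

theorem getLast?_eq_of_reverse_mem_uIcc [LinearOrder B] {α β γ : List B}
    (h : α.getLast? = β.getLast?) (hγ : γ.reverse ∈ Set.uIcc α.reverse β.reverse) :
    α.getLast? = γ.getLast? := by
  simp only [← List.head?_reverse, ← headWithBot_eq_iff_head?_eq] at h ⊢
  have hhead := headWithBot_monotone.mapsTo_uIcc hγ
  rw [← h, Set.uIcc_self] at hhead
  exact hhead.symm

end ListHead

section Colex

variable {A : Type} [LinearOrder A] {α β γ : List A}

theorem colexLE_iff_reverse_le : ColexLE α β ↔ α.reverse ≤ β.reverse := by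
  rw [le_iff_lt_or_eq, List.reverse_inj]
  exact Iff.rfl

theorem colexLE_between_iff_mem_uIcc :
    (ColexLE α γ ∧ ColexLE γ β) ∨ (ColexLE β γ ∧ ColexLE γ α) ↔
      γ.reverse ∈ Set.uIcc α.reverse β.reverse := by
  simp only [colexLE_iff_reverse_le, Set.mem_uIcc]

end Colex

section EquivC

variable {A : Type} [LinearOrder A] {L : Set (List A)}

theorem EquivC.of_between {α β γ : List A} (h : EquivC L α β) (hγ : γ ∈ Pref L)
    (hbetween : (ColexLE α γ ∧ ColexLE γ β) ∨ (ColexLE β γ ∧ ColexLE γ α)) :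
    EquivC L α γ := by
  obtain ⟨_, hlast, hconvex⟩ := h
  have hmem := colexLE_between_iff_mem_uIcc.1 hbetween
  refine ⟨(hconvex γ hγ hbetween).symm, getLast?_eq_of_reverse_mem_uIcc hlast hmem, ?_⟩
  intro δ hδ hδγ
  have hδmem := Set.uIcc_subset_uIcc_left hmem (colexLE_between_iff_mem_uIcc.1 hδγ)
  exact hconvex δ hδ (colexLE_between_iff_mem_uIcc.2 hδmem)

theorem statement18_general {ι : Type*} [LinearOrder ι] {β : ι → List A}
    (hmem : ∀ i, β i ∈ Pref L)
    (hmono : ∀ i j, i ≤ j → ColexLE (β i) (β j))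
    (hcomplete : ∀ α ∈ Pref L, ∃ i, EquivC L α (β i))
    {γ : List A} (hγ : γ ∈ Pref L) {i j : ι} (hij : i ⋖ j)
    (hiγ : ColexLE (β i) γ) (hγj : ColexLE γ (β j)) :
    EquivC L γ (β i) ∨ EquivC L γ (β j) := by
  obtain ⟨k, hk⟩ := hcomplete γ hγ
  rcases lt_or_ge k j with hkj | hjk
  · exact Or.inl (hk.of_between (hmem i) (Or.inr ⟨hmono k i (hij.le_of_lt hkj), hiγ⟩))
  · exact Or.inr (hk.of_between (hmem j) (Or.inl ⟨hγj, hmono j k hjk⟩))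

end EquivC

section Statement18

/-- if `β₁ ≺ … ≺ β_m` is a fingerprint of a Wheeler language
`L`, then every prefix of `L` lying co-lexicographically between two
consecutive fingerprint words is `≡^c_L`-equivalent to one of them. -/
theorem statement18 {A : Type} [Fintype A] [LinearOrder A]
    (L : Set (List A)) (hW : IsWheelerLang L)
    (m : ℕ) (β : Fin m → List A)
    (hmem : ∀ i, β i ∈ Pref L)
    (hsorted : ∀ i j : Fin m, i < j → Colex (β i) (β j))
    (hinj : ∀ i j : Fin m, EquivC L (β i) (β j) → i = j)
    (hcomplete : ∀ α ∈ Pref L, ∃ i, EquivC L α (β i)) :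
    ∀ γ ∈ Pref L, ∀ (s : ℕ) (h1 : s < m) (h2 : s + 1 < m),
      ColexLE (β ⟨s, h1⟩) γ → ColexLE γ (β ⟨s + 1, h2⟩) →
      (EquivC L γ (β ⟨s, h1⟩) ∨ EquivC L γ (β ⟨s + 1, h2⟩)) :=
  fun _ hγ _ _ _ ↦ statement18_general hmem
    (fun i j hij ↦ hij.lt_or_eq.imp (hsorted i j) (congrArg β)) hcomplete hγ (by simp)

end Statement18

end WheelerPaper
end
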